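/- Let l ≥ 1 and let P = {P_0,…,P_{l−1}} be a partition of ω into infinite sets with min P_i < min P_j whenever i < j. For every finite Souslin measurable colouring c of 𝓔^P_∞ and every E ∈ 𝓔^P_∞, there exists F ∈ 𝓔^P_∞ with F ≤ E such that c is constant on 𝓔^P_∞ ↾ F = {F' ∈ 𝓔^P_∞ : F' ≤ F}. -/

import Mathlib

open Set

namespace DualRamsey

/-- `F` is a coarsening of `E` (written `F ≤ E` in the paper): every class of `F`
is a union of classes of `E`. -/
def Coarsens {X : Type*} (F E : Setoid X) : Prop := ∀ a b, E.r a b → F.r a b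

/-- The set of equivalence classes of a setoid. -/
def classes {X : Type*} (E : Setoid X) : Set (Set X) := {C | ∃ x, C = {y | E.r x y}}

/-- The set of minimal representatives of the classes of an equivalence relation on ℕ. -/
def minReps (E : Setoid ℕ) : Set ℕ := {n | ∀ m, E.r n m → n ≤ m}

/-- `pRep E k` is `p_k(E)`, the k-th minimal representative in increasing order. -/
noncomputable def pRep (E : Setoid ℕ) (k : ℕ) : ℕ := Nat.nth (· ∈ minReps E) k

/-- `approx n E` is the n-th approximation `r_n(E)`: `E` restricted to `{0,…,p_n(E)-1}`,
identified with its graph. -/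
noncomputable def approx (n : ℕ) (E : Setoid ℕ) : Set (ℕ × ℕ) :=
  {q | q.1 < pRep E n ∧ q.2 < pRep E n ∧ E.r q.1 q.2}

/-- Basic set `[a, E]` relative to a space `S` of equivalence relations. -/
noncomputable def basicSet (S : Set (Setoid ℕ)) (a : Set (ℕ × ℕ)) (E : ↥S) : Set ↥S :=
  {F | Coarsens F.1 E.1 ∧ ∃ n, approx n F.1 = a}

/-- The Ellentuck topology on a space `S` of equivalence relations. -/
noncomputable def ellentuckTop (S : Set (Setoid ℕ)) : TopologicalSpace ↥S :=
  TopologicalSpace.generateFrom {U | ∃ a E, U = basicSet S a E}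

def IsRamsey (S : Set (Setoid ℕ)) (X : Set ↥S) : Prop :=
  ∀ (a : Set (ℕ × ℕ)) (B : ↥S), (basicSet S a B).Nonempty →
    ∃ A ∈ basicSet S a B, basicSet S a A ⊆ X ∨ basicSet S a A ∩ X = ∅

def IsRamseyNull (S : Set (Setoid ℕ)) (X : Set ↥S) : Prop :=
  ∀ (a : Set (ℕ × ℕ)) (B : ↥S), (basicSet S a B).Nonempty →
    ∃ A ∈ basicSet S a B, basicSet S a A ∩ X = ∅

/-- The property of Baire with respect to the Ellentuck topology. -/
noncomputable def HasBP (S : Set (Setoid ℕ)) (X : Set ↥S) : Prop :=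
  ∃ O M : Set ↥S, (ellentuckTop S).IsOpen O ∧ @IsMeagre _ (ellentuckTop S) M ∧
    X = (O \ M) ∪ (M \ O)

/-- The Souslin operation applied to a scheme indexed by finite sequences of naturals. -/
def souslinOp {X : Type*} (A : List ℕ → Set X) : Set X :=
  ⋃ x : ℕ → ℕ, ⋂ n : ℕ, A ((List.range n).map x)

/-- `Y` belongs to the smallest field of sets containing all `t`-open sets and
closed under the Souslin operation. -/
def SouslinMeasurable {X : Type*} (t : TopologicalSpace X) (Y : Set X) : Prop :=
  ∀ 𝒜 : Set (Set X),
    (∀ U, t.IsOpen U → U ∈ 𝒜) →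
    (∀ A ∈ 𝒜, Aᶜ ∈ 𝒜) →
    (∀ A ∈ 𝒜, ∀ B ∈ 𝒜, A ∪ B ∈ 𝒜) →
    (∀ f : List ℕ → Set X, (∀ s, f s ∈ 𝒜) → souslinOp f ∈ 𝒜) →
    Y ∈ 𝒜

/-- The graph of an equivalence relation as a boolean-valued function. -/
noncomputable def graphMap {X : Type*} (E : Setoid X) : X × X → Bool :=
  fun q => @decide (E.r q.1 q.2) (Classical.dec _)

/-- The metrizable topology on a space of equivalence relations, as a subspace of
`2^(X × X)` via graphs. -/
noncomputable def graphTop {X : Type*} (S : Set (Setoid X)) : TopologicalSpace ↥S :=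
  TopologicalSpace.induced (fun E => graphMap E.1) inferInstance



/-- `𝓔^P_∞` for a partition `P` of ℕ into `l` infinite pieces: the `P`-alternating
equivalence relations, i.e. those with infinitely many classes whose k-th minimal
representative lies in `P (k mod l)`. -/
noncomputable def EPalt (l : ℕ) (hl : 0 < l) (P : Fin l → Set ℕ) : Set (Setoid ℕ) :=
  {E | (classes E).Infinite ∧ ∀ k : ℕ, pRep E k ∈ P ⟨k % l, Nat.mod_lt k hl⟩}

/-! ### Part 1: the Carlson–Simpson lemma via idempotent ultrafilters -/

section CarlsonSimpson

attribute [local instance] Ultrafilter.semigroup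

theorem uf_mem_mul {M : Type*} [Semigroup M] (U V : Ultrafilter M) (s : Set M) :
    s ∈ U * V ↔ {x | {y | x * y ∈ s} ∈ V} ∈ U :=
  Ultrafilter.eventually_mul U V (· ∈ s)

theorem uf_map_mul {M N : Type*} [Semigroup M] [Semigroup N] (f : M →ₙ* N)
    (U V : Ultrafilter M) : (U * V).map f = U.map f * V.map f := by
  ext s
  rw [Ultrafilter.mem_map, uf_mem_mul, uf_mem_mul, Ultrafilter.mem_map]
  simp only [Set.preimage, Set.mem_ofPred_eq, map_mul, Ultrafilter.mem_map]

/-- A minimal idempotent. -/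
theorem exists_min_idem (M : Type*) [Semigroup M] [Nonempty M] :
    ∃ w : Ultrafilter M, w * w = w ∧
      ∀ e : Ultrafilter M, e * e = e → w * e = e → e * w = e → e = w := by
  classical
  let 𝒮 : Set (Set (Ultrafilter M)) :=
    {L | IsClosed L ∧ L.Nonempty ∧ ∀ t, ∀ x ∈ L, t * x ∈ L}
  obtain ⟨L, hL⟩ : ∃ L, Minimal (· ∈ 𝒮) L := by
    refine zorn_superset _ fun c hcs hc => ?_
    refine ⟨⋂₀ c, ⟨isClosed_sInter fun t ht => (hcs ht).1, ?_, ?_⟩, fun s hs => sInter_subset_of_mem hs⟩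
    · obtain rfl | hcnemp := c.eq_empty_or_nonempty
      · rw [sInter_empty]; apply univ_nonempty
      convert
        @IsCompact.nonempty_iInter_of_directed_nonempty_isCompact_isClosed _ _ _ hcnemp.coe_sort
          ((↑) : c → Set (Ultrafilter M)) ?_ ?_ ?_ ?_
      · exact sInter_eq_iInter
      · refine DirectedOn.directed_val (IsChain.directedOn hc.symm)
      exacts [fun i => (hcs i.prop).2.1, fun i => (hcs i.prop).1.isCompact, fun i => (hcs i.prop).1]
    · intro t x hx s hs
      exact (hcs hs).2.2 t x (hx s hs)
  obtain ⟨hLc, hLn, hLi⟩ := hL.prop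
  obtain ⟨w, hwL, hw⟩ := exists_idempotent_in_compact_subsemigroup
    (fun V : Ultrafilter M => Ultrafilter.continuous_mul_left V) L hLn hLc.isCompact
    (fun x _ y hy => hLi x y hy)
  refine ⟨w, hw, fun e he hwe hew => ?_⟩
  have heL : e ∈ L := hew ▸ hLi e w hwL
  have hS : (range fun t : Ultrafilter M => t * e) ∈ 𝒮 := by
    refine ⟨(isCompact_range (Ultrafilter.continuous_mul_left e)).isClosed, range_nonempty _, ?_⟩
    rintro t _ ⟨y, rfl⟩
    exact ⟨t * y, mul_assoc _ _ _⟩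
  have hsub : (range fun t : Ultrafilter M => t * e) ⊆ L := by
    rintro _ ⟨y, rfl⟩
    exact hLi y e heL
  obtain ⟨t, ht⟩ := hL.le_of_le hS hsub hwL
  have ht' : t * e = w := ht
  have : w * e = w := by rw [← ht', mul_assoc, he]
  rw [← hwe, this]

variable {Λ : Type}

/-- Substitution of a letter for the variable `none`. -/
def evW (a : Λ) : FreeMonoid (Option Λ) →* FreeMonoid Λ := FreeMonoid.map (fun o => o.getD a)

def incW : FreeMonoid Λ →* FreeMonoid (Option Λ) := FreeMonoid.map some

theorem evW_incW (a : Λ) (x : FreeMonoid Λ) : evW a (incW x) = x := by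
  have h : ∀ y : List Λ, List.map (fun o : Option Λ => o.getD a) (List.map some y) = y := by
    intro y; simp
  exact h x

/-- variable words -/
def varW (Λ : Type) : Set (FreeMonoid (Option Λ)) := {x | none ∈ x.toList}

theorem exists_uf (Λ : Type) [Nonempty Λ] : ∃ (w : Ultrafilter (FreeMonoid Λ))
    (v : Ultrafilter (FreeMonoid (Option Λ))), w * w = w ∧ varW Λ ∈ v ∧
      ∀ a, v.map (evW a) = w := by
  obtain ⟨w, hw, hmin⟩ := exists_min_idem (FreeMonoid Λ)
  set w' := w.map incW with hw'
  have hev : ∀ a, w'.map (evW a) = w := by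
    intro a
    rw [hw', Ultrafilter.map_map]
    have : (evW a : FreeMonoid (Option Λ) → FreeMonoid Λ) ∘ incW = id := by
      funext x; exact evW_incW a x
    rw [this, Ultrafilter.map_id]
  have hww : w' * w' = w' := by
    rw [hw']
    have := uf_map_mul (incW : FreeMonoid Λ →* FreeMonoid (Option Λ)).toMulHom w w
    rw [hw] at this
    exact this.symm
  let K : Set (Ultrafilter (FreeMonoid (Option Λ))) := {U | varW Λ ∈ U}
  have hK1 : ∀ U ∈ K, ∀ V, U * V ∈ K := by
    intro U hU V
    show varW Λ ∈ U * V
    rw [uf_mem_mul]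
    refine Filter.mem_of_superset hU fun x hx => Filter.univ_mem' fun y => ?_
    show none ∈ List.append x y
    exact List.mem_append_left _ hx
  have hK2 : ∀ U ∈ K, ∀ V, V * U ∈ K := by
    intro U hU V
    show varW Λ ∈ V * U
    rw [uf_mem_mul]
    refine Filter.univ_mem' fun x => Filter.mem_of_superset hU fun y hy => ?_
    show none ∈ List.append x y
    exact List.mem_append_right _ hy
  have hKc : IsClosed K := ultrafilter_isClosed_basic _
  have hKn : K.Nonempty := ⟨pure (FreeMonoid.of none), by
    show varW Λ ∈ (pure (FreeMonoid.of none) : Ultrafilter _)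
    rw [Ultrafilter.mem_pure]
    show none ∈ [none]
    simp⟩
  obtain ⟨v', ⟨U, hUK, hUv⟩, hv'⟩ := exists_idempotent_in_compact_subsemigroup
    (fun V : Ultrafilter (FreeMonoid (Option Λ)) => Ultrafilter.continuous_mul_left V)
    ((fun U => U * w') '' K) (hKn.image _)
    (hKc.isCompact.image (Ultrafilter.continuous_mul_left w')) (by
      rintro _ ⟨U, hU, rfl⟩ _ ⟨V, hV, rfl⟩
      exact ⟨U * w' * V, hK1 _ (hK1 _ hU _) _, by simp [mul_assoc]⟩)
  have hUv : U * w' = v' := hUv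
  have hvw : v' * w' = v' := by rw [← hUv, mul_assoc, hww]
  refine ⟨w, w' * v', hw, ?_, fun a => ?_⟩
  · refine hK2 v' ?_ w'; rw [← hUv]; exact hK1 _ hUK _
  · have hm : ∀ V W, (V * W : Ultrafilter (FreeMonoid (Option Λ))).map (evW a) =
        V.map (evW a) * W.map (evW a) := fun V W => uf_map_mul (evW a).toMulHom V W
    have hid : (w' * v') * (w' * v') = w' * v' := by
      rw [mul_assoc, ← mul_assoc v', hvw, hv']
    apply hmin
    · rw [← hm, hid]
    · conv_lhs => rw [← hev a, ← hm, ← mul_assoc, hww]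
    · conv_lhs => rw [← hev a, ← hm, mul_assoc, hvw]

/-- The constant prefix of a word. -/
def prefW : List (Option Λ) → List Λ
  | [] => []
  | none :: _ => []
  | some a :: t => a :: prefW t

def sufW : List (Option Λ) → List (Option Λ)
  | [] => []
  | none :: t => t
  | some _ :: t => sufW t

theorem pref_suf (x : List (Option Λ)) (h : none ∈ x) :
    x = (prefW x).map some ++ none :: sufW x := by
  induction x with
  | nil => simp at h
  | cons o t ih =>
    cases o with
    | none => simp [prefW, sufW]
    | some a =>
      have : none ∈ t := by simpa using h
      simp only [prefW, sufW, List.map_cons, List.cons_append]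
      rw [← ih this]

/-- Carlson–Simpson, one-step form. -/
theorem cs_step (Λ : Type) [Finite Λ] [Nonempty Λ] (C : Set (List Λ)) :
    ∃ (C' G : Set (List Λ)), (C' = C ∨ C' = Cᶜ) ∧ G.Nonempty ∧
      ∀ F : Set (List Λ), F.Finite → F ⊆ G →
        ∃ x : List (Option Λ), none ∈ x ∧ ∀ s ∈ F, s ++ prefW x ∈ C' ∧
          ∀ a, s ++ x.map (fun o => o.getD a) ∈ G := by
  obtain ⟨w, v, hw, hv, hev⟩ := exists_uf Λ
  let π : FreeMonoid (Option Λ) → FreeMonoid Λ := fun x => prefW x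
  set u := v.map π with hu
  obtain ⟨C', hC', hmem⟩ : ∃ C' : Set (FreeMonoid Λ), (C' = C ∨ C' = Cᶜ) ∧ C' ∈ w * u := by
    by_cases h : (C : Set (FreeMonoid Λ)) ∈ w * u
    · exact ⟨C, Or.inl rfl, h⟩
    · exact ⟨(C : Set (FreeMonoid Λ))ᶜ, Or.inr rfl, Ultrafilter.compl_mem_iff_notMem.2 h⟩
  rw [uf_mem_mul] at hmem
  set C1 : Set (FreeMonoid Λ) := {x | {y | x * y ∈ C'} ∈ u} with hC1
  have hC1' : C1 ∈ w * w := by rw [hw]; exact hmem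
  rw [uf_mem_mul] at hC1'
  set G : Set (FreeMonoid Λ) := {x | x ∈ C1 ∧ {y | x * y ∈ C1} ∈ w} with hG
  have hGw : G ∈ w := Filter.inter_mem hmem hC1'
  have hGG : ∀ s ∈ G, {t | s * t ∈ G} ∈ w := by
    intro s hs
    have h1 := hs.2
    have h2 : {y | s * y ∈ C1} ∈ w * w := by rw [hw]; exact h1
    rw [uf_mem_mul] at h2
    refine Filter.mem_of_superset (Filter.inter_mem h1 h2) ?_
    rintro t ⟨ht1, ht2⟩
    refine ⟨ht1, ?_⟩
    simpa [mul_assoc] using ht2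
  refine ⟨C', G, hC', ?_, fun (F : Set (FreeMonoid Λ)) hF hFG => ?_⟩
  · exact Ultrafilter.nonempty_of_mem hGw
  · have key : ({x | ∀ s ∈ F, π x ∈ {y : FreeMonoid Λ | s * y ∈ C'} ∧
        ∀ a, evW a x ∈ {t : FreeMonoid Λ | s * t ∈ G}}) ∈ v := by
      have : ∀ s ∈ F, {x | π x ∈ {y : FreeMonoid Λ | s * y ∈ C'} ∧
        ∀ a, evW a x ∈ {t : FreeMonoid Λ | s * t ∈ G}} ∈ v := by
        intro s hs
        refine Filter.inter_mem (s := {x | _}) (t := {x | _}) ?_ ?_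
        · exact (hFG hs).1
        · have : ∀ a, {x | evW a x ∈ {t : FreeMonoid Λ | s * t ∈ G}} ∈ v := by
            intro a
            have := hGG s (hFG hs)
            rw [← hev a] at this
            exact this
          exact Filter.eventually_all.2 this
      exact (Filter.eventually_all_finite hF).2 this
    obtain ⟨x, hx1, hx2⟩ := Ultrafilter.nonempty_of_mem (Filter.inter_mem hv key)
    exact ⟨x, hx1, fun s hs => hx2 s hs⟩

/-- Instances of a variable word. -/
def inst (σ : ℕ → Λ) (z : List (Λ ⊕ ℕ)) : List Λ := z.map (Sum.elim id σ)

theorem inst_congr (σ τ : ℕ → Λ) (z : List (Λ ⊕ ℕ)) (k : ℕ) (hz : ∀ j, Sum.inr j ∈ z → j < k)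
    (h : ∀ j < k, σ j = τ j) : inst σ z = inst τ z := by
  refine List.map_congr_left fun o ho => ?_
  cases o with
  | inl a => rfl
  | inr j => exact h j (hz j ho)

/-- The Carlson–Simpson lemma. -/
theorem carlson_simpson (Λ : Type) [Finite Λ] [Nonempty Λ] (C : Set (List Λ)) :
    ∃ (C' : Set (List Λ)) (d : ℕ → ℕ) (Z : ℕ → Λ ⊕ ℕ), (C' = C ∨ C' = Cᶜ) ∧
      StrictMono d ∧ (∀ k, Z (d k) = Sum.inr k) ∧
      (∀ k i, i < d k → ∀ j, Z i = Sum.inr j → j < k) ∧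
      ∀ k (σ : ℕ → Λ), (List.ofFn fun i : Fin (d k) => Sum.elim id σ (Z i)) ∈ C' := by
  obtain ⟨C', G, hC', ⟨g, hg⟩, step⟩ := cs_step Λ C
  -- one step on variable words
  have hstep : ∀ (k : ℕ) (z : List (Λ ⊕ ℕ)), (∀ σ, inst σ z ∈ G) → (∀ j, Sum.inr j ∈ z → j < k) →
      ∃ y t : List (Λ ⊕ ℕ), (∀ σ, inst σ (z ++ y) ∈ C') ∧ (∀ j, Sum.inr j ∈ z ++ y → j < k) ∧
        (∀ σ, inst σ (z ++ y ++ Sum.inr k :: t) ∈ G) ∧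
        (∀ j, Sum.inr j ∈ (z ++ y ++ Sum.inr k :: t) → j < k + 1) := by
    intro k z hz1 hz2
    have hfin : (range fun σ : ℕ → Λ => inst σ z).Finite := by
      refine (List.finite_length_eq Λ z.length).subset ?_
      rintro _ ⟨σ, rfl⟩
      simp [inst]
    obtain ⟨x, hx, hxx⟩ := step _ hfin (by rintro _ ⟨σ, rfl⟩; exact hz1 σ)
    let q : Option Λ → Λ ⊕ ℕ := fun o => o.elim (Sum.inr k) Sum.inl
    refine ⟨(prefW x).map Sum.inl, (sufW x).map q, ?_, ?_, ?_, ?_⟩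
    · intro σ
      have := (hxx _ ⟨σ, rfl⟩).1
      simpa [inst] using this
    · intro j hj
      simp only [List.mem_append, List.mem_map, reduceCtorEq, and_false, exists_false, or_false] at hj
      exact hz2 j hj
    · intro σ
      have h1 := (hxx _ ⟨σ, rfl⟩).2 (σ k)
      have h2 : inst σ (z ++ (prefW x).map Sum.inl ++ Sum.inr k :: (sufW x).map q) =
          inst σ z ++ x.map (fun o => o.getD (σ k)) := by
        conv_rhs => rw [pref_suf x hx]
        simp only [inst, List.map_append, List.map_cons, List.map_map, List.append_assoc]
        have h5 : (Sum.elim id σ ∘ q) = fun o => o.getD (σ k) := by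
          funext o
          cases o <;> simp [q]
        rw [h5]
        simp [Function.comp_def]
      rw [h2]; exact h1
    · intro j hj
      simp only [List.mem_append, List.mem_map, List.mem_cons, reduceCtorEq, and_false, exists_false,
        or_false, Sum.inr.injEq] at hj
      rcases hj with hj | hj | ⟨o, _, ho⟩
      · exact (hz2 j hj).trans (Nat.lt_succ_self k)
      · omega
      · cases o with
        | none => simp [q] at ho; omega
        | some a => simp [q] at ho
  -- the sequence
  let St (k : ℕ) := {z : List (Λ ⊕ ℕ) // (∀ σ, inst σ z ∈ G) ∧ (∀ j, Sum.inr j ∈ z → j < k)}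
  choose y t h1 h2 h3 h4 using hstep
  let nxt (k : ℕ) (z : St k) : St (k+1) :=
    ⟨z.1 ++ y k z.1 z.2.1 z.2.2 ++ Sum.inr k :: t k z.1 z.2.1 z.2.2, h3 _ _ _ _, h4 _ _ _ _⟩
  let z0 : St 0 := ⟨g.map Sum.inl, by intro σ; simpa [inst] using hg, by simp⟩
  let z : (k : ℕ) → St k := fun k => Nat.rec z0 nxt k
  have hz : ∀ k, z (k+1) = nxt k (z k) := fun k => rfl
  let yy (k : ℕ) := y k (z k).1 (z k).2.1 (z k).2.2
  let tt (k : ℕ) := t k (z k).1 (z k).2.1 (z k).2.2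
  have hzz : ∀ k, (z (k+1)).1 = (z k).1 ++ yy k ++ Sum.inr k :: tt k := fun k => rfl
  have hpre1 : ∀ k, (z k).1 ++ yy k ++ [Sum.inr k] <+: (z (k+1)).1 := by
    intro k; rw [hzz]; exact ⟨tt k, by simp⟩
  have hpre : ∀ k m, k ≤ m → (z k).1 <+: (z m).1 := by
    intro k m hkm
    induction hkm with
    | refl => exact List.prefix_rfl
    | step _ ih =>
      refine ih.trans ?_
      rw [hzz, List.append_assoc]; exact List.prefix_append _ _
  have hlen : ∀ k, k ≤ (z k).1.length := by
    intro k
    induction k with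
    | zero => simp
    | succ k ih => rw [hzz]; simp; omega
  let d (k : ℕ) := ((z k).1 ++ yy k).length
  let Z (i : ℕ) : Λ ⊕ ℕ := (z (i+1)).1[i]'(hlen (i+1))
  have hZ : ∀ k i (hi : i < (z k).1.length), (z k).1[i] = Z i := by
    intro k i hi
    rcases le_total k (i+1) with h | h
    · exact (hpre _ _ h).getElem hi
    · exact ((hpre _ _ h).getElem (hlen (i+1))).symm
  have hd : ∀ k, d k < (z (k+1)).1.length := by
    intro k; have := (hpre1 k).length_le
    simp only [List.length_append, List.length_singleton] at this
    simp only [d, List.length_append]; omega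
  have hdl : ∀ k, (z k).1.length ≤ d k := by intro k; simp [d]
  have hZd : ∀ k i (hi : i < d k), ((z k).1 ++ yy k)[i] = Z i := by
    intro k i hi
    rw [← hZ (k+1) i (hi.trans (hd k))]
    have : (z k).1 ++ yy k <+: (z (k+1)).1 := by
      rw [hzz]; exact List.prefix_append _ _
    exact this.getElem hi
  refine ⟨C', d, Z, hC', ?_, ?_, ?_, ?_⟩
  · refine strictMono_nat_of_lt_succ fun k => (hd k).trans_le (hdl (k+1))
  · intro k
    rw [← hZ (k+1) (d k) (hd k)]
    simp [hzz, d]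
  · intro k i hi j hj
    have := hZd k i hi
    rw [hj] at this
    exact h2 k _ (z k).2.1 (z k).2.2 j (this ▸ List.getElem_mem _)
  · intro k σ
    have : (List.ofFn fun i : Fin (d k) => Sum.elim id σ (Z i)) = inst σ ((z k).1 ++ yy k) := by
      apply List.ext_getElem
      · simp [inst, d]
      · intro i hi hi'
        simp only [List.getElem_ofFn, inst, List.getElem_map]
        rw [hZd]
    rw [this]
    exact h1 k _ (z k).2.1 (z k).2.2 σ

end CarlsonSimpson

/-! ### Part 2: basic facts about equivalence relations on ℕ -/

section Basics

theorem rr (E : Setoid ℕ) (x : ℕ) : E.r x x := E.iseqv.refl x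
theorem rs {E : Setoid ℕ} {x y : ℕ} (h : E.r x y) : E.r y x := E.iseqv.symm h
theorem rt {E : Setoid ℕ} {x y z : ℕ} (h : E.r x y) (h' : E.r y z) : E.r x z := E.iseqv.trans h h'

theorem mem_minReps {E : Setoid ℕ} {x : ℕ} : x ∈ minReps E ↔ ∀ y, E.r x y → x ≤ y := Iff.rfl

/-- minimal representative of the class of `x` -/
noncomputable def mr (E : Setoid ℕ) (x : ℕ) : ℕ := sInf {y | E.r x y}

theorem mr_r (E : Setoid ℕ) (x : ℕ) : E.r x (mr E x) :=
  Nat.sInf_mem (s := {y | E.r x y}) ⟨x, rr E x⟩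

theorem mr_le_of {E : Setoid ℕ} {x y : ℕ} (h : E.r x y) : mr E x ≤ y :=
  Nat.sInf_le (s := {y | E.r x y}) h

theorem mr_le (E : Setoid ℕ) (x : ℕ) : mr E x ≤ x := mr_le_of (rr E x)

theorem mr_mem (E : Setoid ℕ) (x : ℕ) : mr E x ∈ minReps E :=
  fun _ hm => mr_le_of (rt (mr_r E x) hm)

theorem mr_eq {E : Setoid ℕ} {x y : ℕ} (h : E.r x y) : mr E x = mr E y :=
  le_antisymm (mr_le_of (rt h (mr_r E y))) (mr_le_of (rt (rs h) (mr_r E x)))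

theorem r_iff_mr {E : Setoid ℕ} {x y : ℕ} : E.r x y ↔ mr E x = mr E y :=
  ⟨mr_eq, fun h => rt (mr_r E x) (h ▸ rs (mr_r E y))⟩

theorem mr_of_mem {E : Setoid ℕ} {x : ℕ} (h : x ∈ minReps E) : mr E x = x :=
  le_antisymm (mr_le E x) (h _ (mr_r E x))

theorem mem_minReps_lt {E : Setoid ℕ} {x : ℕ} : x ∈ minReps E ↔ ∀ y < x, ¬ E.r x y := by
  rw [mem_minReps]
  exact ⟨fun h y hy hr => absurd (h y hr) (not_le.2 hy), fun h y hr => not_lt.1 fun hy => h y hy hr⟩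

theorem minReps_congr {E F : Setoid ℕ} {N : ℕ} (h : ∀ x y, x < N → y < N → (E.r x y ↔ F.r x y))
    {x : ℕ} (hx : x < N) : x ∈ minReps E ↔ x ∈ minReps F := by
  rw [mem_minReps_lt, mem_minReps_lt]
  refine forall₂_congr fun y hy => ?_
  rw [h x y hx (hy.trans hx)]

theorem minReps_infinite {E : Setoid ℕ} (h : (classes E).Infinite) : (minReps E).Infinite := by
  intro hf
  apply h
  refine (hf.image fun x => {y | E.r x y}).subset ?_
  rintro _ ⟨x, rfl⟩
  refine ⟨mr E x, mr_mem E x, ?_⟩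
  ext y
  exact ⟨fun h => rt (mr_r E x) h, fun h => rt (rs (mr_r E x)) h⟩

theorem classes_infinite {E : Setoid ℕ} (h : (minReps E).Infinite) : (classes E).Infinite := by
  intro hf
  apply h
  refine Set.Finite.of_finite_image (f := fun x => {y | E.r x y}) (hf.subset ?_) ?_
  · rintro _ ⟨x, _, rfl⟩
    exact ⟨x, rfl⟩
  · intro x hx y hy hxy
    have h1 : E.r x y := by
      have : y ∈ {z | E.r x z} := by
        have h2 : {z | E.r x z} = {z | E.r y z} := hxy
        rw [h2]; exact rr E y
      exact this
    exact le_antisymm (hx y h1) (hy x (rs h1))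

theorem Coarsens.rfl' {E : Setoid ℕ} : Coarsens E E := fun _ _ h => h
theorem Coarsens.trans' {E F G : Setoid ℕ} (h : Coarsens E F) (h' : Coarsens F G) : Coarsens E G :=
  fun a b hab => h a b (h' a b hab)

theorem Coarsens.minReps {E F : Setoid ℕ} (h : Coarsens F E) : minReps F ⊆ minReps E :=
  fun _ hx y hy => hx y (h _ _ hy)

theorem pRep_of {E : Setoid ℕ} {e : ℕ → ℕ} (he : StrictMono e) (hr : range e = minReps E) :
    (classes E).Infinite ∧ ∀ k, pRep E k = e k := by
  have hi : (minReps E).Infinite := hr ▸ infinite_range_of_injective he.injective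
  refine ⟨classes_infinite hi, fun k => ?_⟩
  have h1 : StrictMono (pRep E) := Nat.nth_strictMono (p := (· ∈ minReps E)) hi
  have h2 : range (pRep E) = minReps E := Nat.range_nth_of_infinite (p := (· ∈ minReps E)) hi
  rw [(h1.range_inj he).1 (h2.trans hr.symm)]

end Basics

section Space

variable {l : ℕ} {hl : 0 < l} {P : Fin l → Set ℕ}

theorem inf' (E : ↥(EPalt l hl P)) : (minReps E.1).Infinite := minReps_infinite E.2.1

theorem pRep_mono (E : ↥(EPalt l hl P)) : StrictMono (pRep E.1) :=
  Nat.nth_strictMono (p := (· ∈ minReps E.1)) (inf' E)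

theorem pRep_range (E : ↥(EPalt l hl P)) : range (pRep E.1) = minReps E.1 :=
  Nat.range_nth_of_infinite (p := (· ∈ minReps E.1)) (inf' E)

theorem pRep_mem (E : ↥(EPalt l hl P)) (k : ℕ) : pRep E.1 k ∈ minReps E.1 :=
  pRep_range E ▸ mem_range_self k

theorem pRep_zero (E : ↥(EPalt l hl P)) : pRep E.1 0 = 0 := by
  have h0 : (0 : ℕ) ∈ minReps E.1 := fun y _ => Nat.zero_le y
  rw [← pRep_range E] at h0
  obtain ⟨k, hk⟩ := h0
  have := (pRep_mono E).monotone (Nat.zero_le k)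
  omega

/-- index of the class of `x` -/
theorem exists_idx (E : ↥(EPalt l hl P)) (x : ℕ) : ∃ k, pRep E.1 k = mr E.1 x := by
  have := mr_mem E.1 x
  rw [← pRep_range E] at this
  exact this

noncomputable def idx (E : ↥(EPalt l hl P)) (x : ℕ) : ℕ := (exists_idx E x).choose

theorem pRep_idx (E : ↥(EPalt l hl P)) (x : ℕ) : pRep E.1 (idx E x) = mr E.1 x :=
  (exists_idx E x).choose_spec

theorem idx_pRep (E : ↥(EPalt l hl P)) (k : ℕ) : idx E (pRep E.1 k) = k := by
  apply (pRep_mono E).injective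
  rw [pRep_idx, mr_of_mem (pRep_mem E k)]

theorem idx_eq_iff (E : ↥(EPalt l hl P)) {x y : ℕ} : idx E x = idx E y ↔ E.1.r x y := by
  rw [r_iff_mr, ← pRep_idx, ← pRep_idx]
  exact (pRep_mono E).injective.eq_iff.symm

theorem r_pidx (E : ↥(EPalt l hl P)) (x : ℕ) : E.1.r x (pRep E.1 (idx E x)) := by
  rw [pRep_idx]; exact mr_r _ _

theorem pidx_le (E : ↥(EPalt l hl P)) (x : ℕ) : pRep E.1 (idx E x) ≤ x := by
  rw [pRep_idx]; exact mr_le _ _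

theorem mem_approx {n : ℕ} {E : Setoid ℕ} {x y : ℕ} :
    (x, y) ∈ approx n E ↔ x < pRep E n ∧ y < pRep E n ∧ E.r x y := Iff.rfl

theorem approx_pRep {n n' : ℕ} {E F : Setoid ℕ} (h : approx n E = approx n' F) :
    pRep E n = pRep F n' := by
  have : ∀ x, x < pRep E n ↔ x < pRep F n' := by
    intro x
    have h1 : (x, x) ∈ approx n E ↔ (x, x) ∈ approx n' F := by rw [h]
    rw [mem_approx, mem_approx] at h1
    simpa [rr] using h1
  exact le_antisymm (not_lt.1 fun h => lt_irrefl _ ((this _).1 h))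
    (not_lt.1 fun h => lt_irrefl _ ((this _).2 h))

theorem approx_agree {n n' : ℕ} {E F : Setoid ℕ} (h : approx n E = approx n' F) {x y : ℕ}
    (hx : x < pRep E n) (hy : y < pRep E n) : E.r x y ↔ F.r x y := by
  have h1 : (x, y) ∈ approx n E ↔ (x, y) ∈ approx n' F := by rw [h]
  rw [mem_approx, mem_approx, ← approx_pRep h] at h1
  simpa [hx, hy] using h1

theorem approx_eq {n n' : ℕ} {E F : Setoid ℕ} (h : pRep E n = pRep F n')
    (h' : ∀ x y, x < pRep E n → y < pRep E n → (E.r x y ↔ F.r x y)) :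
    approx n E = approx n' F := by
  ext ⟨x, y⟩
  rw [mem_approx, mem_approx, ← h]
  constructor
  · rintro ⟨a, b, c⟩; exact ⟨a, b, (h' _ _ a b).1 c⟩
  · rintro ⟨a, b, c⟩; exact ⟨a, b, (h' _ _ a b).2 c⟩

/-- if `E`, `F` agree below `N` then their minimal representatives agree as far as they are `≤`
the first one above. -/
theorem pRep_agree (E F : ↥(EPalt l hl P)) {N : ℕ}
    (h : ∀ x y, x < N → y < N → (E.1.r x y ↔ F.1.r x y)) {k : ℕ} (hk : pRep E.1 k < N) :
    pRep F.1 k = pRep E.1 k := by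
  classical
  have hm : pRep E.1 k ∈ minReps F.1 := (minReps_congr h hk).1 (pRep_mem E k)
  have h1 : Nat.count (· ∈ minReps E.1) (pRep E.1 k) = k :=
    Nat.count_nth_of_infinite (p := (· ∈ minReps E.1)) (inf' E) k
  have h2 : Nat.count (· ∈ minReps F.1) (pRep E.1 k) =
      Nat.count (· ∈ minReps E.1) (pRep E.1 k) := by
    rw [Nat.count_eq_card_filter_range, Nat.count_eq_card_filter_range]
    congr 1
    apply Finset.filter_congr
    intro x hx
    exact (minReps_congr h ((Finset.mem_range.1 hx).trans hk)).symm
  have h3 := Nat.nth_count (p := (· ∈ minReps F.1)) hm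
  rw [h2, h1] at h3
  exact h3

theorem approx_pRep_le {n n' : ℕ} {E F : ↥(EPalt l hl P)} (h : approx n E.1 = approx n' F.1)
    {k : ℕ} (hk : k < n) : pRep F.1 k = pRep E.1 k :=
  pRep_agree E F (fun _ _ hx hy => approx_agree h hx hy) (pRep_mono E hk)

theorem approx_len {n n' : ℕ} {E F : ↥(EPalt l hl P)} (h : approx n E.1 = approx n' F.1) :
    n = n' := by
  have key : ∀ {n n' : ℕ} {E F : ↥(EPalt l hl P)}, approx n E.1 = approx n' F.1 → ¬ n' < n := by
    intro n n' E F h hlt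
    have h1 := approx_pRep_le h hlt
    have h2 := pRep_mono E hlt
    have h3 := approx_pRep h
    omega
  exact le_antisymm (not_lt.1 (key h)) (not_lt.1 (key h.symm))

theorem approx_mono {n : ℕ} {E F : ↥(EPalt l hl P)} (h : approx n E.1 = approx n F.1)
    {k : ℕ} (hk : k ≤ n) : approx k E.1 = approx k F.1 := by
  rcases hk.eq_or_lt with rfl | hk
  · exact h
  refine approx_eq (approx_pRep_le h hk).symm fun x y hx hy => ?_
  have := pRep_mono E hk
  exact approx_agree h (hx.trans this) (hy.trans this)

theorem pRep_le_mono {E : ↥(EPalt l hl P)} {n k : ℕ} (h : n ≤ k) : pRep E.1 n ≤ pRep E.1 k :=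
  (pRep_mono E).monotone h

theorem mod_eq (hdisj : ∀ i j, i ≠ j → Disjoint (P i) (P j)) {E F : ↥(EPalt l hl P)} {n k : ℕ}
    (h : pRep E.1 n = pRep F.1 k) : n % l = k % l := by
  by_contra hne
  have h1 := E.2.2 n
  have h2 := F.2.2 k
  rw [h] at h1
  refine Set.disjoint_left.1 (hdisj ⟨n % l, Nat.mod_lt n hl⟩ ⟨k % l, Nat.mod_lt k hl⟩ ?_) h1 h2
  intro h3
  exact hne (by simpa using h3)

theorem le_pRep {E : ↥(EPalt l hl P)} (n : ℕ) : n ≤ pRep E.1 n := (pRep_mono E).le_apply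

theorem exists_pRep_of_coarsens {E F : ↥(EPalt l hl P)} (h : Coarsens F.1 E.1) (k : ℕ) :
    ∃ i, pRep E.1 i = pRep F.1 k := by
  have := h.minReps (pRep_mem F k)
  rw [← pRep_range E] at this
  exact this

/-- constructing an element of the space -/
theorem mkE {E : Setoid ℕ} {e : ℕ → ℕ} (he : StrictMono e) (hr : range e = minReps E)
    (hP : ∀ k, e k ∈ P ⟨k % l, Nat.mod_lt k hl⟩) :
    E ∈ EPalt l hl P ∧ ∀ k, pRep E k = e k := by
  obtain ⟨h1, h2⟩ := pRep_of he hr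
  exact ⟨⟨h1, fun k => by rw [h2]; exact hP k⟩, h2⟩

abbrev bs (b : Set (ℕ × ℕ)) (E : ↥(EPalt l hl P)) : Set ↥(EPalt l hl P) :=
  basicSet (EPalt l hl P) b E

theorem mem_bs {b : Set (ℕ × ℕ)} {E F : ↥(EPalt l hl P)} :
    F ∈ bs b E ↔ Coarsens F.1 E.1 ∧ ∃ n, approx n F.1 = b := Iff.rfl

theorem bs_mono {b : Set (ℕ × ℕ)} {E F : ↥(EPalt l hl P)} (h : Coarsens F.1 E.1) :
    bs b F ⊆ bs b E := fun _ hG => ⟨hG.1.trans' h, hG.2⟩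

theorem bs_anti {E F : ↥(EPalt l hl P)} {n k : ℕ} (h : n ≤ k) :
    bs (approx k F.1) E ⊆ bs (approx n F.1) E := by
  rintro G ⟨hG, m, hm⟩
  obtain rfl := approx_len hm
  exact ⟨hG, n, approx_mono hm h⟩

theorem self_mem (E : ↥(EPalt l hl P)) (n : ℕ) : E ∈ bs (approx n E.1) E :=
  ⟨Coarsens.rfl', n, rfl⟩

/-- Amalgamation (property A3). -/
theorem amalg (hdisj : ∀ i j, i ≠ j → Disjoint (P i) (P j)) {A B : ↥(EPalt l hl P)} {m n : ℕ}
    (hAB : Coarsens A.1 B.1) (hN : pRep A.1 m = pRep B.1 n) :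
    ∃ A' : ↥(EPalt l hl P), Coarsens A'.1 B.1 ∧ approx n A'.1 = approx n B.1 ∧
      bs (approx m A.1) A' ⊆ bs (approx m A.1) A := by
  classical
  set N := pRep B.1 n with hNdef
  let f : ℕ → ℕ := fun y => if mr B.1 y < N then mr B.1 y else mr A.1 y
  have hmrA : ∀ y, mr B.1 (mr A.1 y) = mr A.1 y := fun y => mr_of_mem (hAB.minReps (mr_mem _ _))
  have hle : ∀ y, f y ≤ y := by
    intro y; simp only [f]; split_ifs
    · exact mr_le _ _
    · exact mr_le _ _
  have hff : ∀ y, f (f y) = f y := by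
    intro y
    by_cases h : mr B.1 y < N
    · have : f y = mr B.1 y := by simp [f, h]
      rw [this]
      have h2 : mr B.1 (mr B.1 y) = mr B.1 y := mr_of_mem (mr_mem _ _)
      simp [f, h2, h]
    · have : f y = mr A.1 y := by simp [f, h]
      rw [this]
      have h2 : mr A.1 (mr A.1 y) = mr A.1 y := mr_of_mem (mr_mem _ _)
      simp [f, hmrA, h2]
  let A0 : Setoid ℕ := Setoid.ker f
  have hA0 : ∀ x y, A0.r x y ↔ f x = f y := fun x y => Iff.rfl
  have hmin : ∀ x, x ∈ minReps A0 ↔ f x = x := by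
    intro x
    constructor
    · intro hx
      refine le_antisymm (hle x) (hx (f x) ?_)
      rw [hA0, hff]
    · intro hx y hy
      rw [hA0, hx] at hy
      rw [hy]; exact hle y
  have hfix : ∀ x, f x = x ↔ (x < N ∧ x ∈ minReps B.1) ∨ (N ≤ x ∧ x ∈ minReps A.1) := by
    intro x
    constructor
    · intro hx
      by_cases h : mr B.1 x < N
      · have : f x = mr B.1 x := by simp [f, h]
        left
        rw [this] at hx
        exact ⟨hx ▸ h, hx ▸ mr_mem _ _⟩
      · have : f x = mr A.1 x := by simp [f, h]
        right
        rw [this] at hx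
        refine ⟨?_, hx ▸ mr_mem _ _⟩
        exact (not_lt.1 h).trans (mr_le _ _)
    · rintro (⟨h1, h2⟩ | ⟨h1, h2⟩)
      · simp [f, mr_of_mem h2, h1]
      · simp [f, mr_of_mem h2, mr_of_mem (hAB.minReps h2)]
  have hmod : m % l = n % l := mod_eq hdisj hN
  let e : ℕ → ℕ := fun k => if k < n then pRep B.1 k else pRep A.1 (m + (k - n))
  have he : StrictMono e := by
    intro i k hik
    simp only [e]
    split_ifs with h1 h2 h2
    · exact pRep_mono B hik
    · calc pRep B.1 i < pRep B.1 n := pRep_mono B h1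
        _ = pRep A.1 m := hN.symm
        _ ≤ _ := pRep_le_mono (by omega)
    · omega
    · exact pRep_mono A (by omega)
  have hr : range e = minReps A0 := by
    ext x
    rw [hmin, hfix]
    constructor
    · rintro ⟨k, rfl⟩
      by_cases h1 : k < n
      · left
        simp only [e, h1, if_true]
        exact ⟨pRep_mono B h1, pRep_mem _ _⟩
      · right
        simp only [e, h1, if_false]
        exact ⟨hN ▸ pRep_le_mono (by omega), pRep_mem _ _⟩
    · rintro (⟨h1, h2⟩ | ⟨h1, h2⟩)
      · rw [← pRep_range B] at h2
        obtain ⟨k, rfl⟩ := h2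
        refine ⟨k, ?_⟩
        simp only [e]
        rw [if_pos ((pRep_mono B).lt_iff_lt.1 h1)]
      · rw [← pRep_range A] at h2
        obtain ⟨k, rfl⟩ := h2
        rw [← hN] at h1
        have := (pRep_mono A).le_iff_le.1 h1
        refine ⟨n + (k - m), ?_⟩
        simp only [e]
        rw [if_neg (by omega)]
        congr 1; omega
  obtain ⟨hA1, hA2⟩ := mkE (l := l) (hl := hl) (P := P) he hr (by
    intro k
    simp only [e]
    split_ifs with h1
    · exact B.2.2 k
    · have h3 := A.2.2 (m + (k - n))
      have h4 : (m + (k - n)) % l = k % l := by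
        rw [Nat.add_mod, hmod, ← Nat.add_mod]
        congr 1; omega
      simpa only [h4] using h3)
  refine ⟨⟨A0, hA1⟩, ?_, ?_, ?_⟩
  · intro x y hxy
    show f x = f y
    simp only [f]
    rw [mr_eq hxy, mr_eq (hAB _ _ hxy)]
  · have hp : pRep A0 n = N := by rw [hA2]; simp [e, hN]
    refine approx_eq hp fun x y hx hy => ?_
    have hx' : x < N := hp ▸ hx
    have hy' : y < N := hp ▸ hy
    show f x = f y ↔ _
    have h1 : ∀ z < N, f z = mr B.1 z := fun z hz => by simp [f, (mr_le B.1 z).trans_lt hz]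
    rw [h1 x hx', h1 y hy', r_iff_mr]
  · rintro G ⟨hG, k, hk⟩
    refine ⟨?_, k, hk⟩
    have hG' : ∀ x y, f x = f y → G.1.r x y := fun x y h => hG x y h
    have key : ∀ y, G.1.r y (mr A.1 y) := by
      intro y
      have h0 : G.1.r y (f y) := hG' _ _ (hff y).symm
      by_cases h : mr B.1 y < N
      · have hf : f y = mr B.1 y := by simp [f, h]
        rw [hf] at h0
        refine rt h0 ?_
        have hpk : pRep G.1 k = N := (approx_pRep hk).trans hN
        have hAr : A.1.r (mr B.1 y) (mr A.1 y) := rt (rs (hAB _ _ (mr_r B.1 y))) (mr_r A.1 y)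
        have hlt : mr A.1 y ≤ mr B.1 y := mr_le_of (hAB _ _ (mr_r B.1 y))
        exact (approx_agree hk (by omega) (by omega)).2 hAr
      · have hf : f y = mr A.1 y := by simp [f, h]
        rwa [hf] at h0
    intro x y hxy
    refine rt (key x) ?_
    rw [mr_eq hxy]
    exact rs (key y)

/-- Limits of fusion sequences. -/
theorem fusion_limit (B : ℕ → ↥(EPalt l hl P)) (m : ℕ)
    (hc : ∀ k, Coarsens (B (k+1)).1 (B k).1)
    (ha : ∀ k, approx (m + k) (B (k+1)).1 = approx (m + k) (B k).1) :
    ∃ A : ↥(EPalt l hl P), ∀ k, Coarsens A.1 (B k).1 ∧ approx (m + k) A.1 = approx (m + k) (B k).1 := by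
  have hcc : ∀ i k, i ≤ k → Coarsens (B k).1 (B i).1 := by
    intro i k hik
    induction hik with
    | refl => exact Coarsens.rfl'
    | step _ ih => exact (hc _).trans' ih
  have haa : ∀ i k, i ≤ k → approx (m + i) (B k).1 = approx (m + i) (B i).1 := by
    intro i k hik
    induction hik with
    | refl => rfl
    | @step k h ih =>
      have h : i ≤ k := h
      exact (approx_mono (ha k) (by omega)).trans ih
  let A0 : Setoid ℕ :=
    { r := fun x y => ∃ k, (B k).1.r x y
      iseqv := by
        refine ⟨fun x => ⟨0, rr _ x⟩, ?_, ?_⟩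
        · rintro x y ⟨k, hk⟩; exact ⟨k, rs hk⟩
        · rintro x y z ⟨k, hk⟩ ⟨i, hi⟩
          exact ⟨max k i, rt (hcc k _ (le_max_left _ _) _ _ hk) (hcc i _ (le_max_right _ _) _ _ hi)⟩ }
  have hag : ∀ k x y, x < pRep (B k).1 (m+k) → y < pRep (B k).1 (m+k) →
      (A0.r x y ↔ (B k).1.r x y) := by
    intro k x y hx hy
    constructor
    · rintro ⟨i, hi⟩
      have h1 := hcc i _ (le_max_right k i) _ _ hi
      exact (approx_agree (haa k _ (le_max_left k i)).symm hx hy).2 h1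
    · intro h; exact ⟨k, h⟩
  let e : ℕ → ℕ := fun k => pRep (B k).1 k
  have hek : ∀ i k, i ≤ m + k → e i = pRep (B k).1 i := by
    intro i k hik
    rcases le_total i k with h | h
    · have h1 := haa i k h
      exact (approx_pRep (approx_mono h1 (show i ≤ m + i by omega))).symm
    · have h1 := haa k i h
      exact approx_pRep (approx_mono h1 (show i ≤ m + k by omega))
  have he : StrictMono e := by
    refine strictMono_nat_of_lt_succ fun k => ?_
    rw [hek k (k+1) (by omega)]
    exact pRep_mono (B (k+1)) (Nat.lt_succ_self k)
  have hr : range e = minReps A0 := by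
    ext x
    have hx : x < pRep (B (x+1)).1 (m+(x+1)) :=
      lt_of_lt_of_le (by omega) (le_pRep (E := B (x+1)) (m+(x+1)))
    rw [minReps_congr (hag (x+1)) hx]
    constructor
    · rintro ⟨i, rfl⟩
      have hi : i ≤ e i := le_pRep (E := B i) i
      have h2 := pRep_mem (B (e i + 1)) i
      rwa [← hek i (e i + 1) (by omega)] at h2
    · intro h
      rw [← pRep_range] at h
      obtain ⟨i, hi⟩ := h
      have h2 : i ≤ pRep (B (x+1)).1 i := le_pRep i
      refine ⟨i, ?_⟩
      rw [hek i (x+1) (by omega), hi]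
  obtain ⟨hA1, hA2⟩ := mkE (l := l) (hl := hl) (P := P) he hr (fun k => (B k).2.2 k)
  refine ⟨⟨A0, hA1⟩, fun k => ⟨fun x y h => ⟨k, h⟩, ?_⟩⟩
  have hp : pRep A0 (m+k) = pRep (B k).1 (m+k) := by rw [hA2, hek _ k le_rfl]
  exact approx_eq hp fun x y hx hy => hag k x y (hp ▸ hx) (hp ▸ hy)

/-- Fusion. -/
theorem fusion (hdisj : ∀ i j, i ≠ j → Disjoint (P i) (P j))
    (D : Set (ℕ × ℕ) → ↥(EPalt l hl P) → Prop)
    (hD : ∀ b A A', bs b A' ⊆ bs b A → D b A → D b A')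
    (B0 : ↥(EPalt l hl P)) (m : ℕ)
    (hdense : ∀ b B, Coarsens B.1 B0.1 → (bs b B).Nonempty → ∃ A ∈ bs b B, D b A) :
    ∃ A : ↥(EPalt l hl P), Coarsens A.1 B0.1 ∧ approx m A.1 = approx m B0.1 ∧
      ∀ C : ↥(EPalt l hl P), Coarsens C.1 A.1 → ∀ j, pRep A.1 m ≤ pRep C.1 j →
        D (approx j C.1) A := by
  classical
  have one : ∀ (B : ↥(EPalt l hl P)) (n : ℕ), Coarsens B.1 B0.1 →
      ∃ B' : ↥(EPalt l hl P), Coarsens B'.1 B.1 ∧ approx n B'.1 = approx n B.1 ∧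
        ∀ C : ↥(EPalt l hl P), Coarsens C.1 B'.1 → ∀ j, pRep C.1 j = pRep B.1 n →
          D (approx j C.1) B' := by
    intro B n hB
    have fin : ∀ s : Finset (Set (ℕ × ℕ)), ∃ B' : ↥(EPalt l hl P), Coarsens B'.1 B.1 ∧
        approx n B'.1 = approx n B.1 ∧
        ∀ C : ↥(EPalt l hl P), Coarsens C.1 B'.1 → ∀ j, pRep C.1 j = pRep B.1 n →
          approx j C.1 ∈ s → D (approx j C.1) B' := by
      intro s
      induction s using Finset.induction_on with
      | empty => exact ⟨B, Coarsens.rfl', rfl, by simp⟩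
      | insert b s _ ih =>
        obtain ⟨B', h1, h2, h3⟩ := ih
        by_cases hb : ∃ C : ↥(EPalt l hl P), Coarsens C.1 B'.1 ∧ ∃ j, pRep C.1 j = pRep B.1 n ∧
            approx j C.1 = b
        · obtain ⟨C, hC, j, hj, rfl⟩ := hb
          obtain ⟨A, hA, hDA⟩ := hdense (approx j C.1) B' (h1.trans' hB) ⟨C, hC, j, rfl⟩
          obtain ⟨hAB, j', hj'⟩ := hA
          have hp : pRep A.1 j' = pRep B'.1 n := by
            rw [approx_pRep hj', hj, approx_pRep h2]
          obtain ⟨A', hA1, hA2, hA3⟩ := amalg hdisj hAB hp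
          rw [hj'] at hA3
          refine ⟨A', hA1.trans' h1, hA2.trans h2, fun C' hC' i hi hmem => ?_⟩
          rcases Finset.mem_insert.1 hmem with h | h
          · rw [h]; exact hD _ _ _ hA3 hDA
          · exact hD _ _ _ (bs_mono hA1) (h3 C' (hC'.trans' hA1) i hi h)
        · refine ⟨B', h1, h2, fun C' hC' i hi hmem => ?_⟩
          rcases Finset.mem_insert.1 hmem with h | h
          · exact absurd ⟨C', hC', i, hi, h⟩ hb
          · exact h3 C' hC' i hi h
    have hfs : {b : Set (ℕ × ℕ) | b ⊆ (Iio (pRep B.1 n)) ×ˢ (Iio (pRep B.1 n))}.Finite :=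
      ((finite_Iio _).prod (finite_Iio _)).finite_subsets
    obtain ⟨B', h1, h2, h3⟩ := fin hfs.toFinset
    refine ⟨B', h1, h2, fun C hC j hj => h3 C hC j hj ?_⟩
    rw [Set.Finite.mem_toFinset]
    rintro ⟨x, y⟩ hxy
    rw [mem_approx, hj] at hxy
    exact ⟨hxy.1, hxy.2.1⟩
  choose nx hn1 hn2 hn3 using one
  let S := {B : ↥(EPalt l hl P) // Coarsens B.1 B0.1}
  let sq : ℕ → S := fun k => Nat.rec (⟨B0, Coarsens.rfl'⟩ : S)
    (fun k B => ⟨nx B.1 (m + k) B.2, (hn1 B.1 (m+k) B.2).trans' B.2⟩) k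
  have hs : ∀ k, (sq (k+1)).1 = nx (sq k).1 (m+k) (sq k).2 := fun k => rfl
  obtain ⟨A, hA⟩ := fusion_limit (fun k => (sq k).1) m
    (fun k => by rw [hs]; exact hn1 _ _ _) (fun k => by rw [hs]; exact hn2 _ _ _)
  refine ⟨A, (hA 0).1, (hA 0).2, fun C hC j hj => ?_⟩
  obtain ⟨i, hi⟩ := exists_pRep_of_coarsens hC j
  rw [← hi] at hj
  have him := (pRep_mono A).le_iff_le.1 hj
  obtain ⟨k, rfl⟩ := Nat.exists_eq_add_of_le him
  have h1 : pRep C.1 j = pRep (sq k).1.1 (m+k) := by rw [← hi]; exact approx_pRep (hA k).2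
  have h2 := hn3 (sq k).1 (m+k) (sq k).2 C (by rw [← hs]; exact hC.trans' (hA (k+1)).1) j h1
  rw [← hs] at h2
  exact hD _ _ _ (bs_mono (hA (k+1)).1) h2

end Space

/-! ### Part 3: the pigeonhole principle -/

section Pigeonhole

variable {l : ℕ} {hl : 0 < l} {P : Fin l → Set ℕ}

/-- Coarsenings given by regressive idempotent maps on indices of classes. -/
theorem mk_index (B : ↥(EPalt l hl P)) (h e : ℕ → ℕ) (hle : ∀ k, h k ≤ k)
    (hid : ∀ k, h (h k) = h k) (he : StrictMono e) (hr : ∀ k, h k = k ↔ ∃ i, e i = k)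
    (hmod : ∀ k, e k % l = k % l) :
    ∃ A : ↥(EPalt l hl P), Coarsens A.1 B.1 ∧
      (∀ x y, A.1.r x y ↔ h (idx B x) = h (idx B y)) ∧ ∀ k, pRep A.1 k = pRep B.1 (e k) := by
  let A0 : Setoid ℕ := Setoid.ker (fun x => h (idx B x))
  have hA0 : ∀ x y, A0.r x y ↔ h (idx B x) = h (idx B y) := fun x y => Iff.rfl
  have hr' : range (fun k => pRep B.1 (e k)) = minReps A0 := by
    ext x
    constructor
    · rintro ⟨k, rfl⟩
      intro y hy
      have hy' : pRep B.1 (e k) = pRep B.1 (e k) := rfl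
      rw [hA0] at hy
      simp only [idx_pRep] at hy
      rw [(hr (e k)).2 ⟨k, rfl⟩] at hy
      have h1 : e k ≤ idx B y := by rw [hy]; exact hle _
      exact (pRep_le_mono h1).trans (pidx_le B y)
    · intro hx
      have h1 : A0.r x (pRep B.1 (h (idx B x))) := by rw [hA0, idx_pRep, hid]
      have h2 := hx _ h1
      have h3 : pRep B.1 (h (idx B x)) ≤ x := (pRep_le_mono (hle _)).trans (pidx_le B x)
      obtain ⟨i, hi⟩ := (hr (h (idx B x))).1 (hid _)
      exact ⟨i, by show pRep B.1 (e i) = x; rw [hi]; omega⟩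
  obtain ⟨h1, h2⟩ := mkE (l := l) (hl := hl) (P := P) ((pRep_mono B).comp he) hr' (by
    intro k
    have h3 := B.2.2 (e k)
    show pRep B.1 (e k) ∈ _
    simpa only [hmod] using h3)
  refine ⟨⟨A0, h1⟩, ?_, hA0, h2⟩
  intro x y hxy
  show h (idx B x) = h (idx B y)
  rw [(idx_eq_iff B).2 hxy]

/-- Property A4. -/
theorem pigeonhole (hdisj : ∀ i j, i ≠ j → Disjoint (P i) (P j)) (B : ↥(EPalt l hl P)) (j : ℕ)
    (O : Set (Set (ℕ × ℕ))) :
    ∃ A ∈ bs (approx j B.1) B, (∀ C ∈ bs (approx j B.1) A, approx (j+1) C.1 ∈ O) ∨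
      (∀ C ∈ bs (approx j B.1) A, approx (j+1) C.1 ∉ O) := by
  classical
  let Λ := Fin l → Fin (j+1)
  let p := pRep B.1
  let g : List Λ → ℕ → ℕ := fun W i => if i ≤ j then i else
    (W.getD ((i-j-1)/l) (fun _ => 0)) ⟨(i-j-1)%l, Nat.mod_lt _ hl⟩
  let dec : List Λ → Set (ℕ × ℕ) := fun W =>
    {q | q.1 < p (j+1+W.length*l) ∧ q.2 < p (j+1+W.length*l) ∧ g W (idx B q.1) = g W (idx B q.2)}
  obtain ⟨C', d, Z, hC', hd, hZ1, hZ2, hcol⟩ := carlson_simpson Λ {W | dec W ∈ O}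
  let h : ℕ → ℕ := fun k => if k ≤ j then k else
    match Z ((k-j-1)/l) with
    | Sum.inl a => a ⟨(k-j-1)%l, Nat.mod_lt _ hl⟩
    | Sum.inr v => j+1+(d v*l+(k-j-1)%l)
  have h_le : ∀ k, k ≤ j → h k = k := fun k hk => by simp [h, hk]
  have h_inl : ∀ i s a, (hs : s < l) → Z i = Sum.inl a → h (j+1+(i*l+s)) = a ⟨s, hs⟩ := by
    intro i s a hs hz
    have h1 : j+1+(i*l+s)-j-1 = s + i*l := by omega
    have h2 : (s+i*l)/l = i := by
      rw [Nat.add_mul_div_right _ _ hl, Nat.div_eq_of_lt hs, zero_add]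
    have h3 : (s+i*l)%l = s := by rw [Nat.add_mul_mod_self_right, Nat.mod_eq_of_lt hs]
    simp only [h, h1, h2, h3, hz]
    rw [if_neg (by omega)]
  have h_inr : ∀ i s v, s < l → Z i = Sum.inr v → h (j+1+(i*l+s)) = j+1+(d v*l+s) := by
    intro i s v hs hz
    have h1 : j+1+(i*l+s)-j-1 = s + i*l := by omega
    have h2 : (s+i*l)/l = i := by
      rw [Nat.add_mul_div_right _ _ hl, Nat.div_eq_of_lt hs, zero_add]
    have h3 : (s+i*l)%l = s := by rw [Nat.add_mul_mod_self_right, Nat.mod_eq_of_lt hs]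
    simp only [h, h1, h2, h3, hz]
    rw [if_neg (by omega)]
  have g_eq : ∀ W i s, (hs : s < l) → g W (j+1+(i*l+s)) = W.getD i (fun _ => 0) ⟨s, hs⟩ := by
    intro W i s hs
    have h1 : j+1+(i*l+s)-j-1 = s + i*l := by omega
    have h2 : (s+i*l)/l = i := by
      rw [Nat.add_mul_div_right _ _ hl, Nat.div_eq_of_lt hs, zero_add]
    have h3 : (s+i*l)%l = s := by rw [Nat.add_mul_mod_self_right, Nat.mod_eq_of_lt hs]
    simp only [g, h1, h2, h3]
    rw [if_neg (by omega)]
  have split : ∀ k, ¬ k ≤ j → ∃ i s, s < l ∧ k = j+1+(i*l+s) := by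
    intro k hk
    refine ⟨(k-j-1)/l, (k-j-1)%l, Nat.mod_lt _ hl, ?_⟩
    have := Nat.div_add_mod' (k-j-1) l
    omega
  have hdle : ∀ i v, Z i = Sum.inr v → d v ≤ i := fun i v hz =>
    not_lt.1 fun hlt => lt_irrefl _ (hZ2 v i hlt v hz)
  have hle : ∀ k, h k ≤ k := by
    intro k
    by_cases hk : k ≤ j
    · rw [h_le k hk]
    · obtain ⟨i, s, hs, rfl⟩ := split k hk
      rcases hz : Z i with a | v
      · rw [h_inl i s a hs hz]
        have := (a ⟨s, hs⟩).2
        omega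
      · rw [h_inr i s v hs hz]
        have := Nat.mul_le_mul_right l (hdle i v hz)
        omega
  have hid : ∀ k, h (h k) = h k := by
    intro k
    by_cases hk : k ≤ j
    · rw [h_le k hk, h_le k hk]
    · obtain ⟨i, s, hs, rfl⟩ := split k hk
      rcases hz : Z i with a | v
      · rw [h_inl i s a hs hz]
        have := (a ⟨s, hs⟩).2
        rw [h_le _ (by omega)]
      · rw [h_inr i s v hs hz, h_inr _ s v hs (hZ1 v)]
  let e : ℕ → ℕ := fun k => if k ≤ j then k else j+1+(d ((k-j-1)/l)*l+(k-j-1)%l)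
  have e_le : ∀ k, k ≤ j → e k = k := fun k hk => by simp [e, hk]
  have e_gt : ∀ i s, s < l → e (j+1+(i*l+s)) = j+1+(d i*l+s) := by
    intro i s hs
    have h1 : j+1+(i*l+s)-j-1 = s + i*l := by omega
    have h2 : (s+i*l)/l = i := by
      rw [Nat.add_mul_div_right _ _ hl, Nat.div_eq_of_lt hs, zero_add]
    have h3 : (s+i*l)%l = s := by rw [Nat.add_mul_mod_self_right, Nat.mod_eq_of_lt hs]
    simp only [e, h1, h2, h3]
    rw [if_neg (by omega)]
  have he : StrictMono e := by
    intro k k' hkk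
    by_cases hk : k ≤ j
    · rw [e_le k hk]
      by_cases hk' : k' ≤ j
      · rw [e_le k' hk']; exact hkk
      · obtain ⟨i, s, hs, rfl⟩ := split k' hk'
        rw [e_gt i s hs]
        omega
    · have hk' : ¬ k' ≤ j := by omega
      obtain ⟨i, s, hs, rfl⟩ := split k hk
      obtain ⟨i', s', hs', rfl⟩ := split k' hk'
      rw [e_gt i s hs, e_gt i' s' hs']
      rcases lt_trichotomy i i' with hi | rfl | hi
      · have h1 : (d i + 1) * l ≤ d i' * l := Nat.mul_le_mul_right l (hd hi)
        rw [Nat.add_mul] at h1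
        omega
      · omega
      · have h1 : (i' + 1) * l ≤ i * l := Nat.mul_le_mul_right l hi
        rw [Nat.add_mul] at h1
        omega
  have hr : ∀ k, h k = k ↔ ∃ i, e i = k := by
    intro k
    constructor
    · intro hk
      by_cases hkj : k ≤ j
      · exact ⟨k, e_le k hkj⟩
      · obtain ⟨i, s, hs, rfl⟩ := split k hkj
        rcases hz : Z i with a | v
        · rw [h_inl i s a hs hz] at hk
          have := (a ⟨s, hs⟩).2
          omega
        · rw [h_inr i s v hs hz] at hk
          exact ⟨j+1+(v*l+s), by rw [e_gt v s hs, hk]⟩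
    · rintro ⟨i, rfl⟩
      by_cases hi : i ≤ j
      · rw [e_le i hi, h_le i hi]
      · obtain ⟨i, s, hs, rfl⟩ := split i hi
        rw [e_gt i s hs, h_inr _ s i hs (hZ1 i)]
  have hmod : ∀ k, e k % l = k % l := by
    intro k
    by_cases hk : k ≤ j
    · rw [e_le k hk]
    · obtain ⟨i, s, hs, rfl⟩ := split k hk
      rw [e_gt i s hs]
      have h1 : j+1+(d i*l+s) = (j+1+s) + d i*l := by omega
      have h2 : j+1+(i*l+s) = (j+1+s) + i*l := by omega
      rw [h1, h2, Nat.add_mul_mod_self_right, Nat.add_mul_mod_self_right]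
  obtain ⟨A, hAB, hAr, hAp⟩ := mk_index B h e hle hid he hr hmod
  have hAj : approx j A.1 = approx j B.1 := by
    have hp : pRep A.1 j = pRep B.1 j := by rw [hAp, e_le j le_rfl]
    refine approx_eq hp fun x y hx hy => ?_
    rw [hAr, ← idx_eq_iff B]
    have hlt : ∀ z, z < pRep A.1 j → idx B z ≤ j := by
      intro z hz
      rw [hp] at hz
      exact ((pRep_mono B).lt_iff_lt.1 ((pidx_le B z).trans_lt hz)).le
    rw [h_le _ (hlt x hx), h_le _ (hlt y hy)]
  refine ⟨A, ⟨hAB, j, hAj⟩, ?_⟩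
  have main : ∀ C ∈ bs (approx j B.1) A, ∃ W ∈ C', approx (j+1) C.1 = dec W := by
    rintro C ⟨hCA, n, hn⟩
    obtain rfl := approx_len hn
    have hCB := hCA.trans' hAB
    obtain ⟨t, ht⟩ := exists_pRep_of_coarsens hCA (n+1)
    have htn : n < t := by
      have h1 : pRep A.1 n < pRep A.1 t := by
        rw [ht, approx_pRep (hAj.trans hn.symm)]
        exact pRep_mono C (Nat.lt_succ_self n)
      exact (pRep_mono A).lt_iff_lt.1 h1
    have htm : t % l = (n+1) % l := mod_eq hdisj ht
    obtain ⟨k, rfl⟩ : ∃ k, t = n+1+(k*l+0) := by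
      have h1 : l ∣ t - (n+1) := (Nat.modEq_iff_dvd' htn).1 htm.symm
      obtain ⟨k, hk⟩ := h1
      exact ⟨k, by rw [Nat.mul_comm k l]; omega⟩
    have hpC : pRep C.1 (n+1) = p (n+1+d k*l) := by
      rw [← ht, hAp, e_gt k 0 hl]; rfl
    let c : ℕ → ℕ := fun i => idx C (p i)
    have hc_le : ∀ i ≤ n, c i = i := by
      intro i hi
      have h1 : pRep C.1 i = pRep B.1 i := approx_pRep (approx_mono hn hi)
      show idx C (pRep B.1 i) = i
      rw [← h1, idx_pRep]
    have hc_lt : ∀ i, i < n+1+d k*l → c i < n+1 := by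
      intro i hi
      have h1 : p i < pRep C.1 (n+1) := by rw [hpC]; exact pRep_mono B hi
      exact (pRep_mono C).lt_iff_lt.1 ((pidx_le C (p i)).trans_lt h1)
    have hc_h : ∀ i, c i = c (h i) := by
      intro i
      refine (idx_eq_iff C).2 (hCA _ _ ?_)
      rw [hAr, idx_pRep, idx_pRep, hid]
    have hCr : ∀ x y, C.1.r x y ↔ c (idx B x) = c (idx B y) := by
      intro x y
      have h1 : ∀ z, c (idx B z) = idx C z := fun z =>
        (idx_eq_iff C).2 (rs (hCB _ _ (r_pidx B z)))
      rw [h1, h1, idx_eq_iff]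
    let σ : ℕ → Λ := fun v s => Fin.ofNat (n+1) (c (n+1+(d v*l+s)))
    have hσ : ∀ v < k, ∀ s : Fin l, ((σ v s : Fin (n+1)) : ℕ) = c (n+1+(d v*l+s)) := by
      intro v hv s
      show c _ % (n+1) = _
      apply Nat.mod_eq_of_lt
      apply hc_lt
      have h1 : (d v + 1) * l ≤ d k * l := Nat.mul_le_mul_right l (hd hv)
      rw [Nat.add_mul] at h1
      have := s.2
      omega
    refine ⟨_, hcol k σ, ?_⟩
    set W := List.ofFn fun i : Fin (d k) => Sum.elim id σ (Z i) with hW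
    have hWl : W.length = d k := by simp [hW]
    have hg : ∀ i, i < n+1+d k*l → g W i = c i := by
      intro i hi
      by_cases hin : i ≤ n
      · rw [hc_le i hin]; simp [g, hin]
      · obtain ⟨q, s, hs, rfl⟩ := split i hin
        have hq : q < d k := by
          by_contra hq
          have := Nat.mul_le_mul_right l (not_lt.1 hq)
          omega
        rw [g_eq W q s hs, hc_h]
        have hWq : W.getD q (fun _ => 0) = Sum.elim id σ (Z q) := by
          rw [List.getD_eq_getElem _ _ (by rw [hWl]; exact hq)]
          simp [hW]
        rw [hWq]
        rcases hz : Z q with a | v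
        · rw [h_inl q s a hs hz, hc_le _ (by have := (a ⟨s, hs⟩).2; omega)]
          rfl
        · rw [h_inr q s v hs hz]
          exact hσ v (hZ2 k q hq v hz) ⟨s, hs⟩
    ext ⟨x, y⟩
    rw [mem_approx]
    show _ ↔ x < p (n+1+W.length*l) ∧ y < p (n+1+W.length*l) ∧ g W (idx B x) = g W (idx B y)
    rw [hWl, hpC]
    refine and_congr_right fun hx => and_congr_right fun hy => ?_
    have hlt : ∀ z, z < p (n+1+d k*l) → idx B z < n+1+d k*l := fun z hz =>
      (pRep_mono B).lt_iff_lt.1 ((pidx_le B z).trans_lt hz)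
    rw [hCr, hg _ (hlt x hx), hg _ (hlt y hy)]
  rcases hC' with rfl | rfl
  · left
    intro C hC
    obtain ⟨W, hW, hWe⟩ := main C hC
    rw [hWe]; exact hW
  · right
    intro C hC
    obtain ⟨W, hW, hWe⟩ := main C hC
    rw [hWe]; exact hW

end Pigeonhole

/-! ### Part 4: the abstract Ellentuck theorem -/

section Ellentuck

variable {l : ℕ} {hl : 0 < l} {P : Fin l → Set ℕ}

/-- Combinatorial forcing. -/
theorem forcing (hdisj : ∀ i j, i ≠ j → Disjoint (P i) (P j)) (X : Set ↥(EPalt l hl P))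
    (B : ↥(EPalt l hl P)) (m : ℕ) :
    ∃ A ∈ bs (approx m B.1) B, bs (approx m B.1) A ∩ X = ∅ ∨
      ∀ C ∈ bs (approx m B.1) A, ∀ j, m ≤ j → (bs (approx j C.1) C ∩ X).Nonempty := by
  obtain ⟨A1, hA1B, hA1a, hA1⟩ := fusion hdisj
    (fun b A => bs b A ∩ X = ∅ ∨ ∀ C ∈ bs b A, (bs b C ∩ X).Nonempty)
    (by
      rintro b A A' hsub (h | h)
      · left
        exact subset_empty_iff.1 (h ▸ inter_subset_inter_left X hsub)
      · right
        exact fun C hC => h C (hsub hC))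
    B m (by
      intro b B' _ hne
      by_cases h : ∃ A ∈ bs b B', bs b A ∩ X = ∅
      · obtain ⟨A, hA, hAX⟩ := h
        exact ⟨A, hA, Or.inl hAX⟩
      · push Not at h
        obtain ⟨A, hA⟩ := hne
        exact ⟨A, hA, Or.inr fun C hC => h C (bs_mono hA.1 hC)⟩)
  let acc : Set (ℕ × ℕ) → Prop := fun b => bs b A1 ∩ X = ∅
  let rej : Set (ℕ × ℕ) → Prop := fun b => ∀ C ∈ bs b A1, (bs b C ∩ X).Nonempty
  have hdec : ∀ C : ↥(EPalt l hl P), Coarsens C.1 A1.1 → ∀ j, pRep A1.1 m ≤ pRep C.1 j →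
      acc (approx j C.1) ∨ rej (approx j C.1) := hA1
  by_cases hacc : acc (approx m B.1)
  · exact ⟨A1, ⟨hA1B, m, hA1a⟩, Or.inl hacc⟩
  have hrej : rej (approx m B.1) := by
    have := hdec A1 Coarsens.rfl' m le_rfl
    rw [hA1a] at this
    exact this.resolve_left hacc
  obtain ⟨A2, hA21, hA2a, hA2⟩ := fusion hdisj
    (fun b A => rej b → ∀ C ∈ bs b A, ∀ j, approx j C.1 = b → ¬ acc (approx (j+1) C.1))
    (by
      intro b A A' hsub h hr C hC
      exact h hr C (hsub hC))
    A1 m (by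
      rintro b B' hB' ⟨B2, hB2, j, rfl⟩
      obtain ⟨A, hA, h⟩ := pigeonhole hdisj B2 j {b | acc b}
      refine ⟨A, bs_mono hB2 hA, fun hr => ?_⟩
      rcases h with h | h
      · exfalso
        obtain ⟨G, hG, hGX⟩ := hr A (bs_mono (hB2.trans' hB') hA)
        have h1 : acc (approx (j+1) G.1) := h G hG
        have h2 : G ∈ bs (approx (j+1) G.1) A1 ∩ X :=
          ⟨⟨hG.1.trans' (hA.1.trans' (hB2.trans' hB')), _, rfl⟩, hGX⟩
        rw [show bs (approx (j+1) G.1) A1 ∩ X = ∅ from h1] at h2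
        exact h2
      · intro C hC i hi
        obtain rfl := approx_len hi
        exact h C hC)
  refine ⟨A2, ⟨hA21.trans' hA1B, m, hA2a.trans hA1a⟩, Or.inr ?_⟩
  rintro C ⟨hC, n, hn⟩ j hj
  obtain rfl := approx_len hn
  have hCr : ∀ i, rej (approx (n + i) C.1) := by
    intro i
    induction i with
    | zero => rw [Nat.add_zero, hn]; exact hrej
    | succ i ih =>
      have hp2 : pRep A2.1 n ≤ pRep C.1 (n+i) := by
        rw [approx_pRep ((hA2a.trans hA1a).trans hn.symm)]
        exact pRep_le_mono (by omega)
      have hp1 : pRep A1.1 n ≤ pRep C.1 (n+i+1) := by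
        rw [approx_pRep (hA1a.trans hn.symm)]
        exact pRep_le_mono (by omega)
      have h1 := hA2 C hC (n+i) hp2 ih C ⟨hC, _, rfl⟩ (n+i) rfl
      exact (hdec C (hC.trans' hA21) _ hp1).resolve_left h1
  obtain ⟨i, rfl⟩ := Nat.exists_eq_add_of_le hj
  exact hCr i C ⟨hC.trans' hA21, _, rfl⟩

theorem ramsey_of {X : Set ↥(EPalt l hl P)}
    (h : ∀ (B : ↥(EPalt l hl P)) (m : ℕ), ∃ A ∈ bs (approx m B.1) B,
      bs (approx m B.1) A ⊆ X ∨ bs (approx m B.1) A ∩ X = ∅) : IsRamsey (EPalt l hl P) X := by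
  rintro a B ⟨B', hB', m, rfl⟩
  obtain ⟨A, hA, h⟩ := h B' m
  exact ⟨A, bs_mono hB' hA, h⟩

theorem null_of {X : Set ↥(EPalt l hl P)}
    (h : ∀ (B : ↥(EPalt l hl P)) (m : ℕ), ∃ A ∈ bs (approx m B.1) B,
      bs (approx m B.1) A ∩ X = ∅) : IsRamseyNull (EPalt l hl P) X := by
  rintro a B ⟨B', hB', m, rfl⟩
  obtain ⟨A, hA, h⟩ := h B' m
  exact ⟨A, bs_mono hB' hA, h⟩

theorem mem_self_of {b : Set (ℕ × ℕ)} {A B : ↥(EPalt l hl P)} (h : A ∈ bs b B) : A ∈ bs b A :=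
  ⟨Coarsens.rfl', h.2⟩

theorem null_ramsey {X : Set ↥(EPalt l hl P)} (h : IsRamseyNull (EPalt l hl P) X) :
    IsRamsey (EPalt l hl P) X := by
  intro a B hB
  obtain ⟨A, hA, h⟩ := h a B hB
  exact ⟨A, hA, Or.inr h⟩

theorem null_subset {X Y : Set ↥(EPalt l hl P)} (h : IsRamseyNull (EPalt l hl P) Y) (hXY : X ⊆ Y) :
    IsRamseyNull (EPalt l hl P) X := by
  intro a B hB
  obtain ⟨A, hA, h⟩ := h a B hB
  exact ⟨A, hA, subset_empty_iff.1 (h ▸ inter_subset_inter_right _ hXY)⟩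

theorem ramsey_compl {X : Set ↥(EPalt l hl P)} (h : IsRamsey (EPalt l hl P) X) :
    IsRamsey (EPalt l hl P) Xᶜ := by
  intro a B hB
  obtain ⟨A, hA, h | h⟩ := h a B hB
  · exact ⟨A, hA, Or.inr (by
      rw [← Set.disjoint_iff_inter_eq_empty]; exact Set.disjoint_compl_right_iff_subset.2 h)⟩
  · exact ⟨A, hA, Or.inl (by
      rw [← Set.disjoint_iff_inter_eq_empty] at h; exact Set.subset_compl_iff_disjoint_right.2 h)⟩

theorem ramsey_union {X Y : Set ↥(EPalt l hl P)} (hX : IsRamsey (EPalt l hl P) X)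
    (hY : IsRamsey (EPalt l hl P) Y) : IsRamsey (EPalt l hl P) (X ∪ Y) := by
  intro a B hB
  obtain ⟨A, hA, h | h⟩ := hX a B hB
  · exact ⟨A, hA, Or.inl (h.trans subset_union_left)⟩
  · obtain ⟨A', hA', h' | h'⟩ := hY a A ⟨A, mem_self_of hA⟩
    · exact ⟨A', bs_mono hA.1 hA', Or.inl (h'.trans subset_union_right)⟩
    · refine ⟨A', bs_mono hA.1 hA', Or.inr ?_⟩
      rw [inter_union_distrib_left, h', union_empty]
      exact subset_empty_iff.1 (h ▸ inter_subset_inter_left X (bs_mono hA'.1))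

theorem open_nhd {X : Set ↥(EPalt l hl P)} (hX : (ellentuckTop (EPalt l hl P)).IsOpen X)
    {C : ↥(EPalt l hl P)} (hC : C ∈ X) : ∃ n, bs (approx n C.1) C ⊆ X := by
  have hX' : TopologicalSpace.GenerateOpen
    {U | ∃ a E, U = basicSet (EPalt l hl P) a E} X := hX
  clear hX
  induction hX' with
  | basic s hs =>
    obtain ⟨a, E, rfl⟩ := hs
    obtain ⟨h1, n, rfl⟩ := hC
    exact ⟨n, bs_mono h1⟩
  | univ => exact ⟨0, subset_univ _⟩
  | inter s t _ _ ihs iht =>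
    obtain ⟨n, hn⟩ := ihs hC.1
    obtain ⟨k, hk⟩ := iht hC.2
    exact ⟨max n k, subset_inter ((bs_anti (le_max_left _ _)).trans hn)
      ((bs_anti (le_max_right _ _)).trans hk)⟩
  | sUnion S _ ih =>
    obtain ⟨s, hs, hCs⟩ := hC
    obtain ⟨n, hn⟩ := ih s hs hCs
    exact ⟨n, hn.trans (subset_sUnion_of_mem hs)⟩

theorem bs_open (a : Set (ℕ × ℕ)) (E : ↥(EPalt l hl P)) :
    (ellentuckTop (EPalt l hl P)).IsOpen (bs a E) :=
  TopologicalSpace.GenerateOpen.basic _ ⟨a, E, rfl⟩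

theorem sUnion_open {S : Set (Set ↥(EPalt l hl P))}
    (h : ∀ s ∈ S, ∃ a E, s = bs a E) : (ellentuckTop (EPalt l hl P)).IsOpen (⋃₀ S) := by
  refine TopologicalSpace.GenerateOpen.sUnion _ fun s hs => ?_
  obtain ⟨a, E, rfl⟩ := h s hs
  exact bs_open a E


theorem open_ramsey (hdisj : ∀ i j, i ≠ j → Disjoint (P i) (P j)) {X : Set ↥(EPalt l hl P)} (hX : (ellentuckTop (EPalt l hl P)).IsOpen X) :
    IsRamsey (EPalt l hl P) X := by
  apply ramsey_of
  intro B m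
  obtain ⟨A, hA, h | h⟩ := forcing hdisj Xᶜ B m
  · refine ⟨A, hA, Or.inl ?_⟩
    intro C hC
    by_contra hCX
    have : C ∈ bs (approx m B.1) A ∩ Xᶜ := ⟨hC, hCX⟩
    rw [h] at this; exact this
  · refine ⟨A, hA, Or.inr ?_⟩
    by_contra hne
    obtain ⟨C, hC, hCX⟩ := Set.nonempty_iff_ne_empty.2 hne
    obtain ⟨n, hn⟩ := open_nhd hX hCX
    obtain ⟨G, hG, hGX⟩ := h C hC (max m n) (le_max_left _ _)
    exact hGX (hn (bs_anti (le_max_right _ _) hG))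

theorem null_iUnion (hdisj : ∀ i j, i ≠ j → Disjoint (P i) (P j)) {X : ℕ → Set ↥(EPalt l hl P)} (hX : ∀ i, IsRamseyNull (EPalt l hl P) (X i)) :
    IsRamseyNull (EPalt l hl P) (⋃ i, X i) := by
  apply null_of
  intro B m
  obtain ⟨A, hAB, hAa, hA⟩ := fusion hdisj
    (fun b A => ∀ C ∈ bs b A, ∀ j, approx j C.1 = b → ∀ i ≤ j, C ∉ X i)
    (by intro b A A' hsub h C hC; exact h C (hsub hC))
    B m (by
      rintro b B' _ ⟨B2, hB2, j, rfl⟩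
      have : ∀ n, ∃ A ∈ bs (approx j B2.1) B2, ∀ i < n, bs (approx j B2.1) A ∩ X i = ∅ := by
        intro n
        induction n with
        | zero => exact ⟨B2, self_mem B2 j, by simp⟩
        | succ n ih =>
          obtain ⟨A, hA, h⟩ := ih
          obtain ⟨A', hA', h'⟩ := hX n (approx j B2.1) A ⟨A, mem_self_of hA⟩
          refine ⟨A', bs_mono hA.1 hA', fun i hi => ?_⟩
          rcases Nat.lt_succ_iff_lt_or_eq.1 hi with hi | rfl
          · exact subset_empty_iff.1 (h i hi ▸ inter_subset_inter_left (X i) (bs_mono hA'.1))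
          · exact h'
      obtain ⟨A, hA, h⟩ := this (j+1)
      refine ⟨A, bs_mono hB2 hA, fun C hC k hk i hi hCX => ?_⟩
      obtain rfl := approx_len hk
      have h2 : C ∈ bs (approx k B2.1) A ∩ X i := ⟨hC, hCX⟩
      rw [h i (by omega)] at h2
      exact h2)
  refine ⟨A, ⟨hAB, m, hAa⟩, ?_⟩
  by_contra hne
  obtain ⟨C, ⟨hCA, n, hn⟩, hCX⟩ := Set.nonempty_iff_ne_empty.2 hne
  obtain rfl := approx_len hn
  obtain ⟨i, hi⟩ := mem_iUnion.1 hCX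
  have hp : pRep A.1 n ≤ pRep C.1 (n+i) := by
    rw [approx_pRep (hAa.trans hn.symm)]; exact pRep_le_mono (by omega)
  exact hA C hCA (n+i) hp C ⟨hCA, _, rfl⟩ (n+i) rfl i (by omega) hi

theorem null_union (hdisj : ∀ i j, i ≠ j → Disjoint (P i) (P j)) {X Y : Set ↥(EPalt l hl P)} (hX : IsRamseyNull (EPalt l hl P) X)
    (hY : IsRamseyNull (EPalt l hl P) Y) : IsRamseyNull (EPalt l hl P) (X ∪ Y) := by
  have := null_iUnion hdisj (X := fun i => if i = 0 then X else Y) (by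
    intro i; split_ifs
    · exact hX
    · exact hY)
  refine null_subset this ?_
  rintro C (h | h)
  · exact mem_iUnion.2 ⟨0, by simpa using h⟩
  · exact mem_iUnion.2 ⟨1, by simpa using h⟩

theorem ramsey_iUnion (hdisj : ∀ i j, i ≠ j → Disjoint (P i) (P j)) {X : ℕ → Set ↥(EPalt l hl P)} (hX : ∀ i, IsRamsey (EPalt l hl P) (X i)) :
    IsRamsey (EPalt l hl P) (⋃ i, X i) := by
  let O : ℕ → Set ↥(EPalt l hl P) := fun i => ⋃₀ {s | (∃ a E, s = bs a E) ∧ s ⊆ X i}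
  have hOX : ∀ i, O i ⊆ X i := fun i => sUnion_subset fun s hs => hs.2
  have hnull : ∀ i, IsRamseyNull (EPalt l hl P) (X i \ O i) := by
    intro i a B hB
    obtain ⟨A, hA, h | h⟩ := hX i a B hB
    · refine ⟨A, hA, ?_⟩
      have : bs a A ⊆ O i := subset_sUnion_of_mem ⟨⟨a, A, rfl⟩, h⟩
      ext C
      simp only [mem_inter_iff, mem_diff, mem_empty_iff_false, iff_false]
      exact fun hC => hC.2.2 (this hC.1)
    · exact ⟨A, hA, subset_empty_iff.1 (h ▸ inter_subset_inter_right _ diff_subset)⟩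
  have hopen : (ellentuckTop (EPalt l hl P)).IsOpen
      (⋃₀ {s | ∃ i, (∃ a E, s = bs a E) ∧ s ⊆ X i}) :=
    sUnion_open fun s hs => by obtain ⟨i, h, _⟩ := hs; exact h
  have heq : (⋃ i, X i) = (⋃₀ {s | ∃ i, (∃ a E, s = bs a E) ∧ s ⊆ X i}) ∪ ⋃ i, (X i \ O i) := by
    apply subset_antisymm
    · intro C hC
      obtain ⟨i, hi⟩ := mem_iUnion.1 hC
      by_cases hO : C ∈ O i
      · obtain ⟨s, hs, hCs⟩ := hO
        exact Or.inl ⟨s, ⟨i, hs⟩, hCs⟩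
      · exact Or.inr (mem_iUnion.2 ⟨i, hi, hO⟩)
    · rintro C (⟨s, ⟨i, _, hs⟩, hCs⟩ | hC)
      · exact mem_iUnion.2 ⟨i, hs hCs⟩
      · obtain ⟨i, hi⟩ := mem_iUnion.1 hC
        exact mem_iUnion.2 ⟨i, hi.1⟩
  rw [heq]
  exact ramsey_union (open_ramsey hdisj hopen) (null_ramsey (null_iUnion hdisj hnull))

theorem ramsey_inter (hdisj : ∀ i j, i ≠ j → Disjoint (P i) (P j)) {X Y : Set ↥(EPalt l hl P)} (hX : IsRamsey (EPalt l hl P) X)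
    (hY : IsRamsey (EPalt l hl P) Y) : IsRamsey (EPalt l hl P) (X ∩ Y) := by
  have := ramsey_compl (ramsey_union (ramsey_compl hX) (ramsey_compl hY))
  rwa [compl_union, compl_compl, compl_compl] at this

/-- Envelopes. -/
theorem envelope (hdisj : ∀ i j, i ≠ j → Disjoint (P i) (P j)) (X : Set ↥(EPalt l hl P)) : ∃ Φ : Set ↥(EPalt l hl P),
    IsRamsey (EPalt l hl P) Φ ∧ X ⊆ Φ ∧
      ∀ Y, IsRamsey (EPalt l hl P) Y → Y ⊆ Φ \ X → IsRamseyNull (EPalt l hl P) Y := by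
  let O : Set ↥(EPalt l hl P) :=
    ⋃₀ {s | (∃ a E, s = bs a E) ∧ IsRamseyNull (EPalt l hl P) (s ∩ X)}
  have hO : (ellentuckTop (EPalt l hl P)).IsOpen O := sUnion_open fun s hs => hs.1
  have hnull : IsRamseyNull (EPalt l hl P) (O ∩ X) := by
    apply null_of
    intro B m
    obtain ⟨A, hA, h | h⟩ := forcing hdisj (O ∩ X) B m
    · exact ⟨A, hA, h⟩
    · exfalso
      have hA' : A ∈ bs (approx m B.1) A := mem_self_of hA
      obtain ⟨G, hG, ⟨s, ⟨⟨a, E, rfl⟩, hs⟩, hGs⟩, hGX⟩ := h A hA' m le_rfl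
      -- G lies in a basic set on which X is null
      have hGA : G ∈ bs (approx m B.1) A := by
        refine ⟨hG.1, m, ?_⟩
        obtain ⟨n, hn⟩ := hG.2
        obtain rfl := approx_len hn
        obtain ⟨k, hk⟩ := hA.2
        obtain rfl := approx_len hk
        exact hn.trans hk
      obtain ⟨hGE, n, rfl⟩ := hGs
      obtain ⟨A', hA'', hnul⟩ := hs (approx (max m n) G.1) G ⟨G, self_mem G _⟩
      have hA3 : A' ∈ bs (approx m B.1) A := by
        refine ⟨hA''.1.trans' hGA.1, m, ?_⟩
        obtain ⟨k, hk⟩ := hA''.2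
        obtain rfl := approx_len hk
        obtain ⟨k', hk'⟩ := hGA.2
        obtain rfl := approx_len hk'
        exact (approx_mono hk (le_max_left _ _)).trans hk'
      obtain ⟨k, hk⟩ := hA''.2
      obtain rfl := approx_len hk
      obtain ⟨H, hH, hHX⟩ := h A' hA3 (max m n) (le_max_left _ _)
      have h1 : H ∈ bs (approx (max m n) G.1) A' := by rw [← hk]; exact hH
      have h2 : H ∈ bs (approx n G.1) E :=
        bs_mono hGE (bs_anti (le_max_right m n) (bs_mono hA''.1 h1))
      have h3 : H ∈ bs (approx (max m n) G.1) A' ∩ (bs (approx n G.1) E ∩ X) := ⟨h1, h2, hHX.2⟩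
      have h4 : bs (approx (max m n) G.1) A' ∩ (bs (approx n G.1) E ∩ X) = ∅ := hnul
      rw [h4] at h3
      exact h3
  refine ⟨Oᶜ ∪ (O ∩ X), ramsey_union (ramsey_compl (open_ramsey hdisj hO)) (null_ramsey hnull), ?_, ?_⟩
  · intro C hC
    by_cases h : C ∈ O
    · exact Or.inr ⟨h, hC⟩
    · exact Or.inl h
  · intro Y hY hYs a B hB
    obtain ⟨A, hA, h | h⟩ := hY a B hB
    · exfalso
      have hAX : bs a A ∩ X = ∅ := by
        ext C
        simp only [mem_inter_iff, mem_empty_iff_false, iff_false]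
        exact fun hC => (hYs (h hC.1)).2 hC.2
      have hAO : bs a A ⊆ O := by
        refine subset_sUnion_of_mem ⟨⟨a, A, rfl⟩, ?_⟩
        rw [hAX]
        rintro a' B' ⟨B'', hB''⟩
        exact ⟨B'', hB'', inter_empty _⟩
      have hAA : A ∈ bs a A := mem_self_of hA
      have h1 := hYs (h hAA)
      rcases h1.1 with h2 | h2
      · exact h2 (hAO hAA)
      · exact h1.2 h2.2
    · exact ⟨A, hA, h⟩

theorem null_iUnion' (hdisj : ∀ i j, i ≠ j → Disjoint (P i) (P j)) {ι : Type*} [Countable ι] [Nonempty ι] {X : ι → Set ↥(EPalt l hl P)}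
    (hX : ∀ i, IsRamseyNull (EPalt l hl P) (X i)) : IsRamseyNull (EPalt l hl P) (⋃ i, X i) := by
  obtain ⟨f, hf⟩ := exists_surjective_nat ι
  rw [← hf.iUnion_comp]
  exact null_iUnion hdisj fun i => hX (f i)

/-- The Ramsey sets are closed under the Souslin operation. -/
theorem ramsey_souslin (hdisj : ∀ i j, i ≠ j → Disjoint (P i) (P j)) {f : List ℕ → Set ↥(EPalt l hl P)}
    (hf : ∀ s, IsRamsey (EPalt l hl P) (f s)) : IsRamsey (EPalt l hl P) (souslinOp f) := by
  let pre : (ℕ → ℕ) → ℕ → List ℕ := fun x n => (List.range n).map x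
  let Xs : List ℕ → Set ↥(EPalt l hl P) := fun s =>
    {C | ∃ x : ℕ → ℕ, pre x s.length = s ∧ ∀ n, C ∈ f (pre x n)}
  have hXf : ∀ s, Xs s ⊆ f s := by
    rintro s C ⟨x, hx, hC⟩
    have := hC s.length
    rwa [hx] at this
  have hX0 : Xs [] = souslinOp f := by
    ext C
    simp only [souslinOp, mem_iUnion, mem_iInter]
    constructor
    · rintro ⟨x, _, h⟩; exact ⟨x, h⟩
    · rintro ⟨x, h⟩; exact ⟨x, rfl, h⟩
  have hXs : ∀ s, Xs s ⊆ ⋃ n, Xs (s ++ [n]) := by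
    rintro s C ⟨x, hx, hC⟩
    refine mem_iUnion.2 ⟨x s.length, x, ?_, hC⟩
    simp only [pre, List.length_append, List.length_singleton, List.range_succ, List.map_append,
      List.map_singleton]
    rw [show (List.range s.length).map x = s from hx]
  choose Φ0 hΦ1 hΦ2 hΦ3 using fun s => envelope hdisj (Xs s)
  let Φ : List ℕ → Set ↥(EPalt l hl P) := fun s => Φ0 s ∩ f s
  have hΦr : ∀ s, IsRamsey (EPalt l hl P) (Φ s) := fun s => ramsey_inter hdisj (hΦ1 s) (hf s)
  have hΦX : ∀ s, Xs s ⊆ Φ s := fun s => subset_inter (hΦ2 s) (hXf s)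
  let M : List ℕ → Set ↥(EPalt l hl P) := fun s => Φ s \ ⋃ n, Φ (s ++ [n])
  have hM : ∀ s, IsRamseyNull (EPalt l hl P) (M s) := by
    intro s
    refine hΦ3 s _ (ramsey_inter hdisj (hΦr s)
      (ramsey_compl (ramsey_iUnion hdisj fun n => hΦr (s ++ [n])))) ?_
    rintro C ⟨hC1, hC2⟩
    refine ⟨hC1.1, fun hCX => hC2 ?_⟩
    exact iUnion_mono (fun n => hΦX (s ++ [n])) (hXs s hCX)
  have hsub : Φ [] \ souslinOp f ⊆ ⋃ s, M s := by
    rintro C ⟨hC, hCX⟩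
    by_contra hCM
    apply hCX
    have hstep : ∀ s : {s // C ∈ Φ s}, ∃ n, C ∈ Φ (s.1 ++ [n]) := by
      intro s
      by_contra hn
      refine hCM (mem_iUnion.2 ⟨s.1, s.2, fun h => hn (mem_iUnion.1 h)⟩)
    choose nx hnx using hstep
    let sq : ℕ → {s // C ∈ Φ s} := fun k => Nat.rec ⟨[], hC⟩ (fun _ s => ⟨s.1 ++ [nx s], hnx s⟩) k
    have hsq : ∀ k, (sq (k+1)).1 = (sq k).1 ++ [nx (sq k)] := fun k => rfl
    have hpre : ∀ k, pre (fun k => nx (sq k)) k = (sq k).1 := by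
      intro k
      induction k with
      | zero => rfl
      | succ k ih =>
        rw [hsq, ← ih]
        simp only [pre, List.range_succ, List.map_append, List.map_singleton]
    refine mem_iUnion.2 ⟨fun k => nx (sq k), mem_iInter.2 fun k => ?_⟩
    have h1 := (sq k).2.2
    rw [← hpre k] at h1
    exact h1
  have hnull : IsRamseyNull (EPalt l hl P) (Φ [] \ souslinOp f) :=
    null_subset (null_iUnion' hdisj hM) hsub
  have heq : souslinOp f = Φ [] ∩ (Φ [] \ souslinOp f)ᶜ := by
    ext C
    constructor
    · intro h
      exact ⟨hΦX [] (hX0 ▸ h), fun h' => h'.2 h⟩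
    · rintro ⟨h1, h2⟩
      by_contra h
      exact h2 ⟨h1, h⟩
  rw [heq]
  exact ramsey_inter hdisj (hΦr []) (ramsey_compl (null_ramsey hnull))

theorem souslin_ramsey (hdisj : ∀ i j, i ≠ j → Disjoint (P i) (P j)) {X : Set ↥(EPalt l hl P)}
    (hX : SouslinMeasurable (ellentuckTop (EPalt l hl P)) X) : IsRamsey (EPalt l hl P) X :=
  hX {Y | IsRamsey (EPalt l hl P) Y} (fun _ hU => open_ramsey hdisj hU)
    (fun _ hA => ramsey_compl hA) (fun _ hA _ hB => ramsey_union hA hB)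
    (fun _ hf => ramsey_souslin hdisj hf)

end Ellentuck

theorem approx_zero_empty {l : ℕ} {hl : 0 < l} {P : Fin l → Set ℕ} (E : ↥(EPalt l hl P)) :
    approx 0 E.1 = ∅ := by
  ext ⟨x, y⟩
  rw [mem_approx, pRep_zero]
  simp

/-- **Corollary 3.3:** for every finite Souslin measurable colouring of `𝓔^P_∞`
and every `E` in the space, there is a coarsening `F ≤ E` in the space such that
the colouring is constant on `𝓔^P_∞ ↾ F`. -/
theorem EPaltSouslinColouring
    (l : ℕ) (hl : 0 < l) (P : Fin l → Set ℕ)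
    (hinf : ∀ i, (P i).Infinite)
    (hdisj : ∀ i j, i ≠ j → Disjoint (P i) (P j))
    (hcov : ⋃ i, P i = Set.univ)
    (hmin : ∀ i j : Fin l, i < j → sInf (P i) < sInf (P j))
    (m : ℕ) (c : ↥(EPalt l hl P) → Fin m)
    (hc : ∀ i : Fin m, SouslinMeasurable (ellentuckTop (EPalt l hl P)) {E | c E = i})
    (E : ↥(EPalt l hl P)) :
    ∃ F : ↥(EPalt l hl P), Coarsens F.1 E.1 ∧
      ∀ F₁ F₂ : ↥(EPalt l hl P), Coarsens F₁.1 F.1 → Coarsens F₂.1 F.1 → c F₁ = c F₂ := by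
  classical
  have key : ∀ n, n ≤ m → ∃ F : ↥(EPalt l hl P), Coarsens F.1 E.1 ∧
      ∀ i : Fin m, i.1 < n → (∀ F' : ↥(EPalt l hl P), Coarsens F'.1 F.1 → c F' = i) ∨
        (∀ F' : ↥(EPalt l hl P), Coarsens F'.1 F.1 → c F' ≠ i) := by
    intro n
    induction n with
    | zero => exact fun _ => ⟨E, Coarsens.rfl', fun i hi => absurd hi (Nat.not_lt_zero _)⟩
    | succ n ih =>
      intro hn
      obtain ⟨F, hFE, hF⟩ := ih (by omega)
      obtain ⟨A, hA, h⟩ := souslin_ramsey hdisj (hc ⟨n, hn⟩) ∅ F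
        ⟨F, Coarsens.rfl', 0, approx_zero_empty F⟩
      refine ⟨A, hA.1.trans' hFE, fun i hi => ?_⟩
      rcases Nat.lt_succ_iff_lt_or_eq.1 hi with hi | hi
      · rcases hF i hi with h1 | h1
        · exact Or.inl fun F' hF' => h1 F' (hF'.trans' hA.1)
        · exact Or.inr fun F' hF' => h1 F' (hF'.trans' hA.1)
      · have hi' : i = ⟨n, hn⟩ := Fin.ext hi
        subst hi'
        rcases h with h | h
        · exact Or.inl fun F' hF' => h ⟨hF', 0, approx_zero_empty F'⟩
        · refine Or.inr fun F' hF' hcF => ?_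
          have h2 : F' ∈ basicSet (EPalt l hl P) ∅ A ∩ {E | c E = ⟨n, hn⟩} :=
            ⟨⟨hF', 0, approx_zero_empty F'⟩, hcF⟩
          rw [h] at h2
          exact h2
  obtain ⟨F, hFE, hF⟩ := key m le_rfl
  refine ⟨F, hFE, fun F₁ F₂ h1 h2 => ?_⟩
  rcases hF (c F₁) (c F₁).2 with h | h
  · exact (h F₂ h2).symm
  · exact absurd rfl (h F₁ h1)

end DualRamsey
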